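/- arXiv:2404.01610 — 4 statements merged into one kernel-verified Lean document; each statement's English description precedes it below -/
import Mathlib

section
/- (Convergence of the first flow) Let ρ > 0, let h : V → ℝ change sign with max_{x∈V} h(x) > 0, let u₀ : V → ℝ satisfy ∫_V h e^{u₀} dμ ≠ 0, and let u : V × [0, +∞) → ℝ be the (global, unique) solution of the first mean field flow ∂_t e^{u} = −Lu + ρ( h e^{u} / ∫_V h e^{u} dμ − 1/|V| ), u(·,0) = u₀, with ∫_V h e^{u(·,t)} dμ ≠ 0 for all t ≥ 0. Then there exists a function u_∞ : V → ℝ such that u(x,t) → u_∞(x) uniformly in x ∈ V as t → +∞, and u_∞ solves the fractional mean field equation Lu_∞(x) = ρ( h(x)e^{u_∞(x)} / ∫_V h e^{u_∞} dμ − 1/|V| ) for every x ∈ V. -/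
open Real Finset

variable {V : Type*}

/-- Discrete integral: `∫_V f dμ = Σ_x μ(x) f(x)`. -/
noncomputable def intV [Fintype V] (μ f : V → ℝ) : ℝ := ∑ x, μ x * f x

/-- Volume `|V| = Σ_x μ(x)`. -/
noncomputable def volV [Fintype V] (μ : V → ℝ) : ℝ := ∑ x, μ x

/-- The nonlocal (fractional graph Laplacian type) operator
`Lu(x) = (1/μ(x)) Σ_{y ≠ x} W(x,y)(u(x) − u(y))`. -/
noncomputable def opL [Fintype V] [DecidableEq V] (μ : V → ℝ) (W : V → V → ℝ)
    (u : V → ℝ) (x : V) : ℝ :=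
  (1 / μ x) * ∑ y ∈ univ.filter (fun y => y ≠ x), W x y * (u x - u y)

/-- Gradient form `∇u·∇v(x) = (1/(2μ(x))) Σ_{y ≠ x} W(x,y)(u(x)−u(y))(v(x)−v(y))`. -/
noncomputable def gradForm [Fintype V] [DecidableEq V] (μ : V → ℝ) (W : V → V → ℝ)
    (u v : V → ℝ) (x : V) : ℝ :=
  (1 / (2 * μ x)) * ∑ y ∈ univ.filter (fun y => y ≠ x), W x y * (u x - u y) * (v x - v y)

/-- `|∇u|²(x) = ∇u·∇u(x)`. -/
noncomputable def gradSq [Fintype V] [DecidableEq V] (μ : V → ℝ) (W : V → V → ℝ)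
    (u : V → ℝ) (x : V) : ℝ := gradForm μ W u u x


theorem derivation_extend {R A B M : Type*} [CommRing R] [CommRing A] [CommRing B] [Algebra R A]
    [Algebra R B] [Algebra A B] [IsScalarTower R A B] [Algebra.FormallyEtale A B]
    [AddCommGroup M] [Module R M] [Module A M] [Module B M] [IsScalarTower A B M]
    [IsScalarTower R A M] [IsScalarTower R B M]
    (d : Derivation R A M) : ∃ d' : Derivation R B M, ∀ a, d' (algebraMap A B a) = d a := by
  let f : TensorProduct A B (Ω[A⁄R]) →ₗ[B] M := d.liftKaehlerDifferential.liftBaseChange B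
  refine ⟨(f ∘ₗ (KaehlerDifferential.tensorKaehlerEquivOfFormallyEtale R A B).symm.toLinearMap).compDer
    (KaehlerDifferential.D R B), fun a => ?_⟩
  simp [f, KaehlerDifferential.tensorKaehlerEquivOfFormallyEtale_symm_D_algebraMap]

/-- `r` is regular at the origin with value `c`. -/
def RegAt {F : Type*} [Field F] (r : RatFunc F) (c : F) : Prop :=
  ∃ p q : Polynomial F, q.eval 0 ≠ 0 ∧ r * algebraMap _ _ q = algebraMap _ _ p ∧ p.eval 0 = c * q.eval 0

section
variable {F : Type*} [Field F]

theorem RegAt.unique {r : RatFunc F} {c c' : F} (h : RegAt r c) (h' : RegAt r c') : c = c' := by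
  obtain ⟨p, q, hq, h1, h2⟩ := h
  obtain ⟨p', q', hq', h1', h2'⟩ := h'
  have : p * q' = p' * q := by
    apply RatFunc.algebraMap_injective F
    rw [map_mul, map_mul, ← h1, ← h1']; ring
  have := congrArg (Polynomial.eval 0) this
  rw [Polynomial.eval_mul, Polynomial.eval_mul, h2, h2'] at this
  have h3 : (c - c') * (q.eval 0 * q'.eval 0) = 0 := by linear_combination this
  have := (mul_eq_zero.1 h3).resolve_right (mul_ne_zero hq hq')
  linear_combination this

theorem RegAt.add {r r' : RatFunc F} {c c' : F} (h : RegAt r c) (h' : RegAt r' c') :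
    RegAt (r + r') (c + c') := by
  obtain ⟨p, q, hq, h1, h2⟩ := h
  obtain ⟨p', q', hq', h1', h2'⟩ := h'
  refine ⟨p * q' + p' * q, q * q', by simp [hq, hq'], ?_, ?_⟩
  · simp only [map_mul, map_add, ← h1, ← h1']; ring
  · simp only [Polynomial.eval_mul, Polynomial.eval_add, h2, h2']; ring

theorem RegAt.mul {r r' : RatFunc F} {c c' : F} (h : RegAt r c) (h' : RegAt r' c') :
    RegAt (r * r') (c * c') := by
  obtain ⟨p, q, hq, h1, h2⟩ := h
  obtain ⟨p', q', hq', h1', h2'⟩ := h'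
  refine ⟨p * p', q * q', by simp [hq, hq'], ?_, ?_⟩
  · simp only [map_mul, ← h1, ← h1']; ring
  · simp only [Polynomial.eval_mul, h2, h2']; ring

theorem RegAt.inv {r : RatFunc F} {c : F} (h : RegAt r c) (hc : c ≠ 0) :
    RegAt r⁻¹ c⁻¹ := by
  obtain ⟨p, q, hq, h1, h2⟩ := h
  have hp : p.eval 0 ≠ 0 := by rw [h2]; exact mul_ne_zero hc hq
  refine ⟨q, p, hp, ?_, ?_⟩
  · have hr : r ≠ 0 := by
      rintro rfl
      rw [zero_mul] at h1
      have : p = 0 := RatFunc.algebraMap_injective F (by rw [← h1, map_zero])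
      simp [this] at hp
    rw [← h1]; field_simp
  · rw [h2]; field_simp

theorem RegAt.poly (p : Polynomial F) : RegAt (algebraMap _ (RatFunc F) p) (p.eval 0) :=
  ⟨p, 1, by simp, by simp, by simp⟩

theorem RegAt.const (c : F) : RegAt (algebraMap F (RatFunc F) c) c := by
  have := RegAt.poly (Polynomial.C c)
  simpa [RatFunc.algebraMap_eq_C] using this

theorem RegAt.X_mul {r : RatFunc F} {c : F} (h : RegAt r c) : RegAt (RatFunc.X * r) 0 := by
  have h1 := RegAt.poly (F := F) Polynomial.X
  simpa using h1.mul h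

theorem RegAt.sum {ι : Type*} (s : Finset ι) {r : ι → RatFunc F} {c : ι → F}
    (h : ∀ i ∈ s, RegAt (r i) (c i)) : RegAt (∑ i ∈ s, r i) (∑ i ∈ s, c i) := by
  classical
  induction s using Finset.induction_on with
  | empty => simpa using RegAt.const (0 : F)
  | insert a s ha ih =>
    rw [Finset.sum_insert ha, Finset.sum_insert ha]
    exact (h a (by simp)).add (ih fun i hi => h i (by simp [hi]))

/-- Decomposition of a nonzero polynomial. -/
theorem poly_decomp (p : Polynomial F) (hp : p ≠ 0) :
    ∃ (n : ℕ) (q : Polynomial F), p = Polynomial.X ^ n * q ∧ q.eval 0 ≠ 0 := by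
  obtain ⟨q, h1, h2⟩ := Polynomial.exists_eq_pow_rootMultiplicity_mul_and_not_dvd p hp 0
  refine ⟨_, q, by simpa using h1, ?_⟩
  rw [Polynomial.dvd_iff_isRoot] at h2
  exact h2

theorem ratFunc_decomp (r : RatFunc F) (hr : r ≠ 0) :
    ∃ (n : ℤ) (p q : Polynomial F), p.eval 0 ≠ 0 ∧ q.eval 0 ≠ 0 ∧
      r = RatFunc.X ^ n * (algebraMap _ _ p / algebraMap _ _ q) := by
  obtain ⟨n, p, hp, hp0⟩ := poly_decomp r.num (RatFunc.num_ne_zero hr)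
  obtain ⟨m, q, hq, hq0⟩ := poly_decomp r.denom (RatFunc.denom_ne_zero r)
  refine ⟨n - m, p, q, hp0, hq0, ?_⟩
  have hX : (RatFunc.X : RatFunc F) ≠ 0 := RatFunc.X_ne_zero
  have hqq : algebraMap _ (RatFunc F) q ≠ 0 := by
    intro h
    have : q = 0 := RatFunc.algebraMap_injective F (by rw [h, map_zero])
    simp [this] at hq0
  rw [← RatFunc.num_div_denom r, hp, hq, zpow_sub₀ hX]
  simp only [map_mul, map_pow, RatFunc.algebraMap_X, zpow_natCast]
  field_simp

theorem der_poly (d : Derivation F (RatFunc F) (RatFunc F)) (hd : d RatFunc.X = 1)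
    (p : Polynomial F) :
    d (algebraMap _ (RatFunc F) p) = algebraMap _ _ (Polynomial.derivative p) := by
  have h1 : ∀ q : Polynomial F, algebraMap _ (RatFunc F) q = Polynomial.aeval RatFunc.X q := by
    intro q
    rw [← RatFunc.algebraMap_X, Polynomial.aeval_algebraMap_apply]; simp
  rw [h1, h1, Derivation.map_aeval, hd]; simp

/-- `X * logDeriv` is regular with value the order. -/
theorem regAt_logDeriv (d : Derivation F (RatFunc F) (RatFunc F)) (hd : d RatFunc.X = 1)
    (r : RatFunc F) (n : ℤ) (p q : Polynomial F) (hp : p.eval 0 ≠ 0)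
    (hq : q.eval 0 ≠ 0) (hr : r = RatFunc.X ^ n * (algebraMap _ _ p / algebraMap _ _ q)) :
    RegAt (RatFunc.X * (d r / r)) (n : F) := by
  have hX : (RatFunc.X : RatFunc F) ≠ 0 := RatFunc.X_ne_zero
  have key : ∀ q : Polynomial F, q.eval 0 ≠ 0 → algebraMap _ (RatFunc F) q ≠ 0 := by
    intro q hq0 h
    have : q = 0 := RatFunc.algebraMap_injective F (by rw [h, map_zero])
    simp [this] at hq0
  have hpp := key p hp
  have hqq := key q hq
  have e : RatFunc.X * (d r / r) = algebraMap F (RatFunc F) (n : F) + RatFunc.X *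
      (algebraMap _ _ (Polynomial.derivative p) * (algebraMap _ _ p)⁻¹
        + algebraMap F _ (-1) * (algebraMap _ _ (Polynomial.derivative q) * (algebraMap _ _ q)⁻¹)) := by
    rw [hr, Derivation.leibniz, Derivation.leibniz_div, Derivation.leibniz_zpow, der_poly d hd,
      der_poly d hd, hd]
    simp only [smul_eq_mul, zsmul_eq_mul, map_intCast, map_neg, map_one, zpow_sub₀ hX, zpow_one]
    field_simp
    ring
  rw [e]
  have := (RegAt.const (F := F) n).add (((RegAt.poly (Polynomial.derivative p)).mul
    ((RegAt.poly p).inv hp)).add ((RegAt.const (-1)).mul ((RegAt.poly (Polynomial.derivative q)).mul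
    ((RegAt.poly q).inv hq)))).X_mul
  simpa using this

theorem residue_lemma [CharZero F] (d : Derivation F (RatFunc F) (RatFunc F)) (hd : d RatFunc.X = 1)
    {ι : Type*} [Fintype ι] (β : ι → F)
    (hβ : LinearIndependent ℚ β) (N : ι → RatFunc F) (hN : ∀ i, N i ≠ 0) (G : RatFunc F)
    (hG : d G = ∑ i, algebraMap F (RatFunc F) (β i) * (d (N i) / N i))
    (j : ι) (m : ℕ) (hm : m ≠ 0) (hj : N j = RatFunc.X ^ m) : False := by
  have hX : (RatFunc.X : RatFunc F) ≠ 0 := RatFunc.X_ne_zero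
  choose a p q hp hq h using fun i => ratFunc_decomp (N i) (hN i)
  have hreg := fun i => regAt_logDeriv d hd (N i) (a i) (p i) (q i) (hp i) (hq i) (h i)
  have haj : a j = m := by
    have h2 := regAt_logDeriv d hd (N j) (m : ℤ) 1 1 (by simp) (by simp) (by simp [hj])
    have := (hreg j).unique h2
    exact_mod_cast this
  have hR : RegAt (RatFunc.X * d G) (∑ i, β i * (a i : F)) := by
    have : RatFunc.X * d G = ∑ i, algebraMap F (RatFunc F) (β i) * (RatFunc.X * (d (N i) / N i)) := by
      rw [hG, Finset.mul_sum]; refine Finset.sum_congr rfl fun i _ => by ring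
    rw [this]
    exact RegAt.sum _ fun i _ => (RegAt.const _).mul (hreg i)
  have hb : ∑ i, β i * (a i : F) ≠ 0 := by
    intro h0
    rw [Fintype.linearIndependent_iff] at hβ
    have := hβ (fun i => (a i : ℚ)) (by
      rw [← h0]; refine Finset.sum_congr rfl fun i _ => ?_
      rw [Algebra.smul_def]; simp [mul_comm]) j
    rw [haj] at this
    exact hm (by exact_mod_cast this)
  set b := ∑ i, β i * (a i : F)
  by_cases hG0 : G = 0
  · rw [hG0] at hR
    simp only [map_zero, mul_zero] at hR
    have := RegAt.const (F := F) 0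
    rw [map_zero] at this
    exact hb (hR.unique this)
  obtain ⟨s, p, q, hp, hq, hGd⟩ := ratFunc_decomp G hG0
  have hlog := regAt_logDeriv d hd G s p q hp hq hGd
  have hw : RegAt (algebraMap _ (RatFunc F) p / algebraMap _ _ q) (p.eval 0 * (q.eval 0)⁻¹) := by
    rw [div_eq_mul_inv]; exact (RegAt.poly p).mul ((RegAt.poly q).inv hq)
  have hw0 : p.eval 0 * (q.eval 0)⁻¹ ≠ 0 := mul_ne_zero hp (inv_ne_zero hq)
  have hmul := hlog.mul hw
  have hXpow : ∀ k : ℕ, k ≠ 0 → RegAt (RatFunc.X ^ k : RatFunc F) 0 := by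
    intro k hk
    have := RegAt.poly (F := F) (Polynomial.X ^ k)
    simpa [hk] using this
  rcases lt_trichotomy s 0 with hs | hs | hs
  · obtain ⟨k, rfl⟩ : ∃ k : ℕ, s = -(k : ℤ) := ⟨s.natAbs, by omega⟩
    have hk : k ≠ 0 := by rintro rfl; simp at hs
    have h2 := (hXpow k hk).mul hR
    have e : RatFunc.X ^ k * (RatFunc.X * d G) =
      RatFunc.X * (d G / G) * (algebraMap _ (RatFunc F) p / algebraMap _ _ q) := by
      have : algebraMap _ (RatFunc F) p / algebraMap _ _ q = RatFunc.X ^ k * G := by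
        rw [hGd, ← mul_assoc]; simp [hX]
      rw [this]; field_simp
    rw [e] at h2
    have := h2.unique hmul
    rw [zero_mul] at this
    have h3 := (mul_eq_zero.1 this.symm).resolve_right hw0
    apply hk
    have : (k : F) = 0 := by simpa using h3
    exact_mod_cast this
  · subst hs
    have e : RatFunc.X * d G =
      RatFunc.X * (d G / G) * (algebraMap _ (RatFunc F) p / algebraMap _ _ q) := by
      have : algebraMap _ (RatFunc F) p / algebraMap _ _ q = G := by
        rw [hGd]; simp
      rw [this]; field_simp
    rw [e] at hR
    have := hR.unique hmul
    simp at this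
    exact hb this
  · obtain ⟨k, rfl⟩ : ∃ k : ℕ, s = (k : ℤ) := ⟨s.natAbs, by omega⟩
    have hk : k ≠ 0 := by rintro rfl; simp at hs
    have e : RatFunc.X * d G =
      RatFunc.X ^ k * (RatFunc.X * (d G / G) * (algebraMap _ (RatFunc F) p / algebraMap _ _ q)) := by
      have : G = RatFunc.X ^ k * (algebraMap _ (RatFunc F) p / algebraMap _ _ q) := by
        rw [hGd]; simp
      calc RatFunc.X * d G = RatFunc.X * (d G / G) * G := by field_simp
        _ = RatFunc.X * (d G / G) * (RatFunc.X ^ k * (algebraMap _ (RatFunc F) p / algebraMap _ _ q)) := by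
          rw [← this]
        _ = _ := by ring
    have h2 := (hXpow k hk).mul hmul
    rw [← e, zero_mul] at h2
    exact hb (hR.unique h2)
end

@[reducible] def toDifferential {F R : Type*} [CommRing F] [CommRing R] [Algebra F R]
    (d : Derivation F R R) : Differential R := ⟨d.restrictScalars ℤ⟩

theorem rosenlicht_aux {F K : Type*} [Field F] [Field K] [CharZero F] [Algebra F K]
    [Algebra (RatFunc F) K] [IsScalarTower F (RatFunc F) K] [FiniteDimensional (RatFunc F) K]
    {ι : Type*} [Fintype ι] (β : ι → F) (hβ : LinearIndependent ℚ β) (y : ι → K)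
    (hy : ∀ i, y i ≠ 0) (g : K)
    (H : ∀ E : Derivation F K K, E g = ∑ i, algebraMap F K (β i) * (E (y i) / y i))
    (j : ι) (hj : y j = algebraMap (RatFunc F) K RatFunc.X) : False := by
  have : CharZero (RatFunc F) := charZero_of_injective_algebraMap (algebraMap F (RatFunc F)).injective
  have : CharZero K := charZero_of_injective_algebraMap (algebraMap F K).injective
  let d0 : Derivation F (Polynomial F) (RatFunc F) :=
    (Algebra.linearMap (Polynomial F) (RatFunc F)).compDer Polynomial.derivative'
  have fe1 : Algebra.FormallyEtale (Polynomial F) (RatFunc F) :=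
    Algebra.FormallyEtale.of_isLocalization (nonZeroDivisors (Polynomial F))
  obtain ⟨d, hd⟩ := derivation_extend (B := RatFunc F) d0
  have hdX : d RatFunc.X = 1 := by
    rw [← RatFunc.algebraMap_X, hd]; simp [d0]
  let d1 : Derivation F (RatFunc F) K := (Algebra.linearMap (RatFunc F) K).compDer d
  have fe2 : Algebra.FormallyEtale (RatFunc F) K := Algebra.FormallyEtale.of_isSeparable _ _
  obtain ⟨E, hE⟩ := derivation_extend (B := K) d1
  let L := AlgebraicClosure K
  let d2 : Derivation F K L := (Algebra.linearMap K L).compDer E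
  have fe3 : Algebra.FormallyEtale K L := Algebra.FormallyEtale.of_isSeparable _ _
  obtain ⟨E', hE'⟩ := derivation_extend (B := L) d2
  let i1 : Differential (RatFunc F) := toDifferential d
  let i2 : Differential K := toDifferential E
  let i3 : Differential L := toDifferential E'
  have : DifferentialAlgebra (RatFunc F) K := ⟨fun a => hE a⟩
  have : DifferentialAlgebra (RatFunc F) L := ⟨fun a => by
    have : algebraMap (RatFunc F) L a = algebraMap K L (algebraMap _ K a) := rfl
    rw [this]
    refine (hE' _).trans ?_
    change algebraMap K L (E (algebraMap _ K a)) = _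
    rw [hE]; rfl⟩
  have comm : ∀ (σ : K →ₐ[RatFunc F] L) (x : K), σ (E x) = E' (σ x) := fun σ x =>
    Differential.algHom_deriv' σ σ.injective x
  have hEM : ∀ r : RatFunc F, E' (algebraMap _ L r) = algebraMap _ L (d r) := fun r =>
    DifferentialAlgebra.deriv_algebraMap (A := RatFunc F) (B := L) r
  have hσF : ∀ (σ : K →ₐ[RatFunc F] L) (c : F), σ (algebraMap F K c) = algebraMap F L c := by
    intro σ c
    rw [IsScalarTower.algebraMap_apply F (RatFunc F) K, σ.commutes,
      ← IsScalarTower.algebraMap_apply F (RatFunc F) L]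
  have logd : ∀ x : K, x ≠ 0 → algebraMap (RatFunc F) L (d (Algebra.norm (RatFunc F) x) /
      Algebra.norm (RatFunc F) x) = ∑ σ : K →ₐ[RatFunc F] L, E' (σ x) / σ x := by
    intro x hx
    rw [map_div₀, ← hEM, Algebra.norm_eq_prod_embeddings (RatFunc F) L]
    exact Differential.logDeriv_prod _ Finset.univ (fun σ : K →ₐ[RatFunc F] L => σ x)
      (fun σ _ => by simpa using hx)
  refine residue_lemma d hdX β hβ (fun i => Algebra.norm (RatFunc F) (y i))
    (fun i => by simpa [Algebra.norm_eq_zero_iff] using hy i) (Algebra.trace (RatFunc F) K g) ?_ j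
    (Module.finrank (RatFunc F) K) Module.finrank_pos.ne' ?_
  · apply (algebraMap (RatFunc F) L).injective
    rw [← hEM, trace_eq_sum_embeddings L, map_sum, map_sum]
    simp only [map_mul, logd _ (hy _), ← IsScalarTower.algebraMap_apply F (RatFunc F) L]
    simp only [← comm, H E, map_sum, map_mul, hσF, map_div₀]
    rw [Finset.sum_comm]
    simp only [Finset.mul_sum]
  · simp only [hj]
    rw [Algebra.norm_algebraMap]

theorem rosenlicht {C K : Type*} [Field C] [Field K] [CharZero C] [Algebra C K]
    (S : Set K) (hSf : S.Finite) (hS : IntermediateField.adjoin C S = ⊤)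
    {ι : Type*} [Fintype ι] (β : ι → C) (hβ : LinearIndependent ℚ β) (y : ι → K)
    (hy : ∀ i, y i ≠ 0) (g : K)
    (H : ∀ E : Derivation C K K, E g = ∑ i, algebraMap C K (β i) * (E (y i) / y i))
    (j : ι) : IsAlgebraic C (y j) := by
  by_contra htr
  have htr : Transcendental C (y j) := htr
  obtain ⟨t, hst, ht⟩ := exists_isTranscendenceBasis_superset (R := C) (s := {y j}) (by
    have : AlgebraicIndependent C (fun i : ({y j} : Set K) => (i : K)) := by
      rw [algebraicIndependent_singleton_iff ⟨y j, rfl⟩]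
      exact htr
    exact this)
  have hyt : y j ∈ t := hst rfl
  let s : Set K := t \ {y j}
  let F := IntermediateField.adjoin C s
  have hF : Transcendental F (y j) := by
    rw [IntermediateField.transcendental_adjoin_iff]
    have := ht.1.transcendental_adjoin (s := {x | x ≠ ⟨y j, hyt⟩}) (i := ⟨y j, hyt⟩) (by simp)
    have e : (Subtype.val '' {x : t | x ≠ ⟨y j, hyt⟩}) = s := by
      ext x
      simp only [Set.mem_image, Set.mem_ofPred_eq, Subtype.exists, s, Set.mem_sdiff, Set.mem_singleton_iff]
      constructor
      · rintro ⟨a, ha, h1, rfl⟩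
        exact ⟨ha, fun h => h1 (by simp [h])⟩
      · rintro ⟨h1, h2⟩
        exact ⟨x, h1, fun h => h2 (by simpa using h), rfl⟩
    rw [e] at this
    exact this
  let e := RatFunc.algEquivOfTranscendental (y j) hF
  let : Algebra (RatFunc F) K := ((algebraMap (IntermediateField.adjoin F {y j}) K).comp
    (e : RatFunc F →+* _)).toAlgebra
  have hmap : ∀ r, algebraMap (RatFunc F) K r = (e r : K) := fun r => rfl
  have : IsScalarTower F (RatFunc F) K := IsScalarTower.of_algebraMap_eq fun a => by
    rw [hmap, e.commutes]; rfl
  have hX : algebraMap (RatFunc F) K RatFunc.X = y j := by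
    rw [hmap]; exact RatFunc.algEquivOfTranscendental_X ..
  -- algebraicity
  have halg : Algebra.IsAlgebraic (RatFunc F) K := by
    have h1 := ht.isAlgebraic_field
    let R : Subfield K := (algebraMap (RatFunc F) K).fieldRange
    let R' : IntermediateField C K := R.toIntermediateField (fun c => by
      refine ⟨algebraMap F _ (algebraMap C F c), ?_⟩
      rw [← IsScalarTower.algebraMap_apply F (RatFunc F) K]; rfl)
    have hle : IntermediateField.adjoin C (Set.range (Subtype.val : t → K)) ≤ R' := by
      rw [IntermediateField.adjoin_le_iff]
      rintro _ ⟨⟨x, hx⟩, rfl⟩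
      by_cases hxy : x = y j
      · exact ⟨RatFunc.X, by rw [hX]; exact hxy.symm⟩
      · have hxF : x ∈ F := IntermediateField.subset_adjoin C s ⟨hx, hxy⟩
        refine ⟨algebraMap F _ ⟨x, hxF⟩, ?_⟩
        rw [← IsScalarTower.algebraMap_apply F (RatFunc F) K]; rfl
    refine ⟨fun x => ?_⟩
    obtain ⟨p, hp0, hp⟩ := h1.isAlgebraic x
    have hlift : p.map (algebraMap _ K) ∈ Polynomial.lifts (algebraMap (RatFunc F) K) := by
      rw [Polynomial.lifts_iff_coeff_lifts]
      intro n
      rw [Polynomial.coeff_map]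
      exact hle (p.coeff n).2
    obtain ⟨q, hq⟩ := (Polynomial.mem_lifts _).1 hlift
    refine ⟨q, ?_, ?_⟩
    · rintro rfl
      rw [Polynomial.map_zero] at hq
      exact hp0 ((Polynomial.map_eq_zero_iff Subtype.val_injective).1 hq.symm)
    · rw [Polynomial.aeval_def, ← Polynomial.eval_map, hq, Polynomial.eval_map, ← Polynomial.aeval_def, hp]
  have hfin : FiniteDimensional (RatFunc F) K := by
    have h1 : IntermediateField.adjoin (RatFunc F) S = ⊤ := by
      rw [eq_top_iff]
      intro x _
      let R' : IntermediateField C K := (IntermediateField.adjoin (RatFunc F) S).toSubfield.toIntermediateField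
        (fun c => by
          have : algebraMap C K c = algebraMap (RatFunc F) K (algebraMap F _ (algebraMap C F c)) := by
            rw [← IsScalarTower.algebraMap_apply F (RatFunc F) K]; rfl
          rw [this]
          exact (IntermediateField.adjoin (RatFunc F) S).algebraMap_mem _)
      have : IntermediateField.adjoin C S ≤ R' := by
        rw [IntermediateField.adjoin_le_iff]
        exact IntermediateField.subset_adjoin (RatFunc F) S
      rw [hS] at this
      exact this (show x ∈ ⊤ from trivial)
    have := hSf.to_subtype
    have h2 : FiniteDimensional (RatFunc F) (IntermediateField.adjoin (RatFunc F) S) :=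
      IntermediateField.finiteDimensional_adjoin fun x _ => (halg.isAlgebraic x).isIntegral
    rw [h1] at h2
    exact (IntermediateField.topEquiv (F := RatFunc F) (E := K)).toLinearEquiv.finiteDimensional
  have : CharZero F := charZero_of_injective_algebraMap (algebraMap C F).injective
  refine rosenlicht_aux (F := F) (K := K) (fun i => algebraMap C F (β i)) ?_ y hy g ?_ j hX.symm
  · exact hβ.map' ((algebraMap C F : C →+* F).toAddMonoidHom.toRatLinearMap) (by
      rw [LinearMap.ker_eq_bot]; exact (algebraMap C F).injective)
  · intro E
    exact H (E.restrictScalars C)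


theorem der_zpow {C K : Type*} [Field C] [Field K] [Algebra C K] (E : Derivation C K K) (a : K)
    (ha : a ≠ 0) (n : ℤ) : E (a ^ n) / a ^ n = n * (E a / a) := by
  rw [Derivation.leibniz_zpow]
  have := zpow_ne_zero n ha
  rw [zpow_sub_one₀ ha]
  simp only [smul_eq_mul, zsmul_eq_mul]
  field_simp

theorem der_prod {C K : Type*} [Field C] [Field K] [Algebra C K] (E : Derivation C K K)
    {ι : Type*} (s : Finset ι) (a : ι → K)
    (ha : ∀ i, a i ≠ 0) : E (∏ i ∈ s, a i) / (∏ i ∈ s, a i) = ∑ i ∈ s, E (a i) / a i := by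
  classical
  induction s using Finset.induction_on with
  | empty => simp
  | insert i s hi ih =>
    rw [Finset.prod_insert hi, Finset.sum_insert hi, ← ih, E.leibniz]
    have h1 := ha i
    have h2 : ∏ i ∈ s, a i ≠ 0 := Finset.prod_ne_zero_iff.2 fun i _ => ha i
    simp only [smul_eq_mul]
    field_simp
    ring

theorem der_alg {C K : Type*} [Field C] [Field K] [CharZero C] [Algebra C K] (D : Derivation C K K)
    (y : K) (hy : IsAlgebraic C y) : D y = 0 := by
  have h1 := D.map_aeval (minpoly C y) y
  rw [minpoly.aeval, map_zero] at h1
  have h2 := (minpoly.irreducible hy.isIntegral).separable.aeval_derivative_ne_zero (minpoly.aeval C y)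
  simpa [h2] using h1.symm

theorem common_denom {ι κ : Type*} [Fintype ι] [Fintype κ] (q : ι → κ → ℚ) :
    ∃ (d : ℤ) (n : ι → κ → ℤ), d ≠ 0 ∧ ∀ i j, (d : ℚ) * q i j = n i j := by
  classical
  obtain ⟨b, hb⟩ := IsLocalization.exist_integer_multiples_of_finite (nonZeroDivisors ℤ)
    (fun p : ι × κ => q p.1 p.2)
  choose n hn using hb
  refine ⟨b, fun i j => n (i, j), nonZeroDivisors.ne_zero b.2, fun i j => ?_⟩
  have := hn (i, j)
  simp at this
  simp [this]

theorem ax_const {C K : Type*} [Field C] [Field K] [CharZero C] [Algebra C K]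
    (D : Derivation C K K) (hC : ∀ a, D a = 0 → ∃ c, algebraMap C K c = a)
    {ι : Type*} [Fintype ι] (x l : ι → K) (hx : IntermediateField.adjoin C (Set.range x) = ⊤)
    (hl : ∀ i, l i ≠ 0) (hD : ∀ i, D (l i) = l i * D (x i)) (f : ι → C)
    (hf : ∀ E : Derivation C K K, ∑ i, algebraMap C K (f i) * (E (x i) - E (l i) / l i) = 0)
    (E : Derivation C K K) : ∑ i, algebraMap C K (f i) * E (x i) = 0 := by
  classical
  have : CharZero K := charZero_of_injective_algebraMap (algebraMap C K).injective
  let N : Submodule ℚ C := Submodule.span ℚ (Set.range f)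
  have : FiniteDimensional ℚ N := FiniteDimensional.span_of_finite ℚ (Set.finite_range f)
  let b := Module.finBasis ℚ N
  have hfN : ∀ i, f i ∈ N := fun i => Submodule.subset_span ⟨i, rfl⟩
  obtain ⟨d, n, hd, hn⟩ := common_denom (fun i j => b.repr ⟨f i, hfN i⟩ j)
  have hdC : (d : C) ≠ 0 := by exact_mod_cast hd
  have hdQ : (d : ℚ) ≠ 0 := by exact_mod_cast hd
  let β : Fin (Module.finrank ℚ N) → C := fun j => ((d : ℚ)⁻¹) • (b j : C)
  have hβ : LinearIndependent ℚ β := by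
    have h1 : LinearIndependent ℚ (fun j => (b j : C)) :=
      b.linearIndependent.map' N.subtype (by simp)
    exact h1.units_smul (fun _ => (Units.mk0 (d : ℚ) hdQ)⁻¹)
  have hfβ : ∀ i, f i = ∑ j, (n i j : C) * β j := by
    intro i
    have h1 := congrArg (Subtype.val) (b.sum_repr ⟨f i, hfN i⟩)
    simp only [Submodule.coe_sum, Submodule.coe_smul] at h1
    rw [← h1]
    refine Finset.sum_congr rfl fun j _ => ?_
    have h2 : b.repr ⟨f i, hfN i⟩ j = (d : ℚ)⁻¹ * n i j := by
      rw [← hn]; field_simp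
    rw [h2]
    simp only [β, Algebra.smul_def, map_mul, map_inv₀, map_intCast]
    ring
  let y : Fin (Module.finrank ℚ N) → K := fun j => ∏ i, l i ^ n i j
  have hy : ∀ j, y j ≠ 0 := fun j => Finset.prod_ne_zero_iff.2 fun i _ => zpow_ne_zero _ (hl i)
  have hEy : ∀ (E : Derivation C K K) j, E (y j) / y j = ∑ i, (n i j : K) * (E (l i) / l i) := by
    intro E j
    simp only [y]
    rw [der_prod E _ _ (fun i => zpow_ne_zero _ (hl i))]
    exact Finset.sum_congr rfl fun i _ => der_zpow E _ (hl i) _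
  have hsum : ∀ z : ι → K, ∑ i, algebraMap C K (f i) * z i =
      ∑ j, algebraMap C K (β j) * ∑ i, (n i j : K) * z i := by
    intro z
    simp only [Finset.mul_sum]
    rw [Finset.sum_comm]
    refine Finset.sum_congr rfl fun i _ => ?_
    rw [hfβ i, map_sum, Finset.sum_mul]
    refine Finset.sum_congr rfl fun j _ => ?_
    rw [map_mul, map_intCast]; ring
  have halg : ∀ j, IsAlgebraic C (y j) := by
    refine rosenlicht (Set.range x) (Set.finite_range x) hx β hβ y hy
      (∑ i, algebraMap C K (f i) * x i) fun E => ?_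
    simp only [hEy]
    rw [← hsum]
    have := hf E
    simp only [mul_sub, Finset.sum_sub_distrib] at this
    rw [← sub_eq_zero.1 this, map_sum]
    refine Finset.sum_congr rfl fun i _ => ?_
    simp
  rw [hsum]
  refine Finset.sum_eq_zero fun j _ => ?_
  have h1 := hEy D j
  rw [der_alg D _ (halg j), zero_div] at h1
  have h2 : D (∑ i, (n i j : K) * x i) = 0 := by
    rw [h1, map_sum]
    refine Finset.sum_congr rfl fun i _ => ?_
    rw [hD, mul_div_cancel_left₀ _ (hl i)]
    simp
  obtain ⟨c, hc⟩ := hC _ h2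
  have h3 : E (∑ i, (n i j : K) * x i) = 0 := by rw [← hc]; simp
  rw [map_sum] at h3
  rw [show ∑ i, (n i j : K) * E (x i) = ∑ i, E ((n i j : K) * x i) from
    Finset.sum_congr rfl fun i _ => by simp, h3, mul_zero]

theorem ax_rel {C K : Type*} [Field C] [Field K] [DecidableEq K] [CharZero C] [Algebra C K]
    (D : Derivation C K K) (hC : ∀ a, D a = 0 → ∃ c, algebraMap C K c = a)
    {ι : Type*} [Fintype ι] (x l : ι → K) (hx : IntermediateField.adjoin C (Set.range x) = ⊤)
    (hl : ∀ i, l i ≠ 0) (hD : ∀ i, D (l i) = l i * D (x i)) (m : ℕ) : ∀ (f : ι → K),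
    (Finset.univ.filter (fun i => f i ≠ 0)).card ≤ m →
    (∀ E : Derivation C K K, ∑ i, f i * (E (x i) - E (l i) / l i) = 0) →
    ∀ (E : Derivation C K K), ∑ i, f i * E (x i) = 0 := by
  classical
  induction m with
  | zero =>
    intro f hc hf E
    refine Finset.sum_eq_zero fun i _ => ?_
    have : f i = 0 := by
      by_contra h
      have : i ∈ (Finset.univ.filter (fun i => f i ≠ 0)) := by simp [h]
      simp [Finset.card_eq_zero.1 (Nat.le_zero.1 hc)] at this
    simp [this]
  | succ m ih =>
    intro f hc hf E
    -- D-stability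
    have hstab : ∀ f : ι → K, (∀ E : Derivation C K K, ∑ i, f i * (E (x i) - E (l i) / l i) = 0) →
        (∀ E : Derivation C K K, ∑ i, D (f i) * (E (x i) - E (l i) / l i) = 0) := by
      intro f hf E
      have h1 := congrArg D (hf E)
      have h2 := hf ⁅D, E⁆
      rw [map_zero, map_sum] at h1
      rw [← sub_eq_zero.2 (h1.trans h2.symm), ← Finset.sum_sub_distrib]
      refine Finset.sum_congr rfl fun i _ => ?_
      have hli := hl i
      simp only [Derivation.leibniz, map_sub, Derivation.commutator_apply, Derivation.leibniz_div, hD, smul_eq_mul]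
      field_simp
      ring
    by_cases h0 : ∀ i, f i = 0
    · simp [h0]
    push Not at h0
    obtain ⟨i0, hi0⟩ := h0
    let g : ι → K := fun i => f i / f i0
    have hg : ∀ E : Derivation C K K, ∑ i, g i * (E (x i) - E (l i) / l i) = 0 := by
      intro E
      have : ∀ i, g i * (E (x i) - E (l i) / l i) = (f i0)⁻¹ * (f i * (E (x i) - E (l i) / l i)) := by
        intro i; simp only [g]; ring
      simp only [this, ← Finset.mul_sum, hf, mul_zero]
    suffices hs : ∑ i, g i * E (x i) = 0 by
      have : ∀ i, f i * E (x i) = f i0 * (g i * E (x i)) := by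
        intro i; simp only [g]; field_simp
      simp only [this, ← Finset.mul_sum, hs, mul_zero]
    have hg0 : g i0 = 1 := div_self hi0
    have hsmall : ∀ f' : ι → K, (∀ i, f i = 0 → f' i = 0) → (∃ i, f i ≠ 0 ∧ f' i = 0) →
        (Finset.univ.filter (fun i => f' i ≠ 0)).card ≤ m := by
      rintro f' h1 ⟨i, h2, h3⟩
      refine Nat.lt_succ_iff.1 (lt_of_lt_of_le (Finset.card_lt_card ?_) hc)
      refine ⟨fun j => ?_, fun h => ?_⟩
      · simp only [Finset.mem_filter, Finset.mem_univ, true_and]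
        exact fun h h' => h (h1 j h')
      · have := h (x := i) (by simp [h2])
        simp [h3] at this
    by_cases hconst : ∀ i, D (g i) = 0
    · choose c hc using fun i => hC _ (hconst i)
      have := ax_const D hC x l hx hl hD c (by simpa [hc] using hg) E
      simpa [hc] using this
    push Not at hconst
    obtain ⟨j, hj⟩ := hconst
    have e1 := ih (fun i => D (g i)) (hsmall _ (fun i hi => by simp [g, hi]) ⟨i0, hi0, by simp [hg0]⟩)
      (hstab g hg) E
    have hfj : f j ≠ 0 := by rintro h; simp [g, h] at hj
    have e2 := ih (fun i => g i - (g j / D (g j)) * D (g i))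
      (hsmall _ (fun i hi => by simp [g, hi]) ⟨j, hfj, by
        rw [div_mul_cancel₀ _ hj, sub_self]⟩) (by
        intro E
        simp only [sub_mul, Finset.sum_sub_distrib, hg, mul_assoc, ← Finset.mul_sum, hstab g hg]
        simp) E
    simp only [sub_mul, Finset.sum_sub_distrib, mul_assoc, ← Finset.mul_sum, e1] at e2
    simpa using e2

theorem ax_main {C K : Type*} [Field C] [Field K] [CharZero C] [Algebra C K]
    (D : Derivation C K K) (hC : ∀ a, D a = 0 → ∃ c, algebraMap C K c = a)
    {ι : Type*} [Fintype ι] (x l : ι → K) (hx : IntermediateField.adjoin C (Set.range x) = ⊤)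
    (hl : ∀ i, l i ≠ 0) (hD : ∀ i, D (l i) = l i * D (x i)) : D = 0 := by
  classical
  let Ψ : Derivation C K K →ₗ[K] (ι → K) :=
    { toFun := fun E i => E (x i)
      map_add' := fun _ _ => rfl
      map_smul' := fun _ _ => rfl }
  let Φ : Derivation C K K →ₗ[K] (ι → K) :=
    { toFun := fun E i => E (x i) - E (l i) / l i
      map_add' := fun E F => by ext i; simp; ring
      map_smul' := fun a E => by ext i; simp; ring }
  have hinj : Function.Injective Ψ := by
    rw [injective_iff_map_eq_zero]
    intro E hE
    have hE' : ∀ i, E (x i) = 0 := fun i => congrFun hE i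
    let R : IntermediateField C K :=
      { carrier := {a | E a = 0}
        mul_mem' := fun {a b} ha hb => by
          simp only [Set.mem_ofPred_eq] at *
          simp [ha, hb]
        add_mem' := fun {a b} ha hb => by
          simp only [Set.mem_ofPred_eq] at *
          simp [ha, hb]
        algebraMap_mem' := fun c => by simp
        inv_mem' := fun a ha => by
          simp only [Set.mem_ofPred_eq] at *
          simp [Derivation.leibniz_inv, ha] }
    have : IntermediateField.adjoin C (Set.range x) ≤ R := by
      rw [IntermediateField.adjoin_le_iff]
      rintro _ ⟨i, rfl⟩
      exact hE' i
    rw [hx] at this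
    ext a
    exact this (show a ∈ ⊤ from trivial)
  have : FiniteDimensional K (Derivation C K K) := FiniteDimensional.of_injective Ψ hinj
  have hle : LinearMap.range Ψ ≤ LinearMap.range Φ := by
    rintro _ ⟨E, rfl⟩
    by_contra hE
    obtain ⟨F, hF1, hF2⟩ := Submodule.exists_le_ker_of_notMem hE
    have hF : ∀ v : ι → K, F v = ∑ i, F (Pi.single i 1) * v i := by
      intro v
      conv_lhs => rw [pi_eq_sum_univ' v]
      rw [map_sum]
      refine Finset.sum_congr rfl fun i _ => ?_
      rw [map_smul, smul_eq_mul, mul_comm]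
    apply hF1
    rw [hF]
    refine ax_rel D hC x l hx hl hD _ (fun i => F (Pi.single i 1)) le_rfl (fun E => ?_) E
    have := hF2 ⟨E, rfl⟩
    rw [LinearMap.mem_ker, hF] at this
    exact this
  have hk : Module.finrank K (LinearMap.ker Φ) = 0 := by
    have h1 := LinearMap.finrank_range_add_finrank_ker Φ
    have h2 := Submodule.finrank_mono hle
    rw [LinearMap.finrank_range_of_inj hinj] at h2
    omega
  have hDk : D ∈ LinearMap.ker Φ := by
    rw [LinearMap.mem_ker]
    ext i
    change D (x i) - D (l i) / l i = 0
    rw [hD, mul_div_cancel_left₀ _ (hl i), sub_self]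
  rw [Submodule.finrank_eq_zero.1 hk] at hDk
  simpa using hDk

theorem ax_real {k K : Type*} [Field k] [Field K] [CharZero k] [Algebra k K]
    (D : Derivation k K K)
    {ι : Type*} [Fintype ι] (x l : ι → K) (hx : IntermediateField.adjoin k (Set.range x) = ⊤)
    (hl : ∀ i, l i ≠ 0) (hD : ∀ i, D (l i) = l i * D (x i)) : D = 0 := by
  let C : IntermediateField k K :=
      { carrier := {a | D a = 0}
        mul_mem' := fun {a b} ha hb => by
          simp only [Set.mem_ofPred_eq] at *
          simp [ha, hb]
        add_mem' := fun {a b} ha hb => by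
          simp only [Set.mem_ofPred_eq] at *
          simp [ha, hb]
        algebraMap_mem' := fun c => by simp
        inv_mem' := fun a ha => by
          simp only [Set.mem_ofPred_eq] at *
          simp [Derivation.leibniz_inv, ha] }
  have : CharZero C := charZero_of_injective_algebraMap (algebraMap k C).injective
  have hCm : ∀ c : C, D (c : K) = 0 := fun c => c.2
  let D' : Derivation C K K := Derivation.mk'
    { toFun := D
      map_add' := fun a b => map_add D a b
      map_smul' := fun c a => by
        change D ((c : K) * a) = (c : K) * D a
        rw [D.leibniz, hCm]; simp } (fun a b => D.leibniz a b)
  have h := ax_main (C := C) D' (fun a ha => ⟨⟨a, ha⟩, rfl⟩) x l (by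
    rw [eq_top_iff]
    intro a _
    have : IntermediateField.adjoin k (Set.range x) ≤
        (IntermediateField.adjoin C (Set.range x)).restrictScalars k := by
      rw [IntermediateField.adjoin_le_iff]
      exact IntermediateField.subset_adjoin C _
    rw [hx] at this
    exact this (show a ∈ ⊤ from trivial)) hl hD
  ext a
  exact DFunLike.congr_fun h a


theorem der_descend {R P A K : Type*} [CommRing R] [CommRing P] [CommRing A] [Field K]
    [Algebra R P] [Algebra R A] [Algebra R K] [Algebra P A] [Algebra P K] [Algebra A K]
    [IsScalarTower R P A] [IsScalarTower P A K] [IsScalarTower R A K]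
    (d : Derivation R P K) (hs : Function.Surjective (algebraMap P A))
    (hd : ∀ p, algebraMap P A p = 0 → d p = 0) :
    ∃ d' : Derivation R A K, ∀ p, d' (algebraMap P A p) = d p := by
  choose s hs using hs
  have key : ∀ p q, algebraMap P A p = algebraMap P A q → d p = d q := fun p q h => by
    rw [← sub_eq_zero, ← map_sub]; exact hd _ (by rw [map_sub, h, sub_self])
  have hsmul : ∀ (p : P) (k : K), p • k = algebraMap P A p • k := fun p k => by
    rw [algebraMap_smul]
  refine ⟨Derivation.mk'
    { toFun := fun a => d (s a)
      map_add' := fun a b => by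
        rw [← map_add]; apply key; rw [map_add, hs, hs, hs]
      map_smul' := fun r a => by
        rw [RingHom.id_apply, ← Derivation.map_smul]; apply key
        rw [Algebra.smul_def, Algebra.smul_def, map_mul, hs, hs, ← IsScalarTower.algebraMap_apply] }
    (fun a b => ?_), fun p => ?_⟩
  · change d (s (a * b)) = a • d (s b) + b • d (s a)
    rw [key (s (a * b)) (s a * s b) (by rw [map_mul, hs, hs, hs]), d.leibniz, hsmul, hsmul, hs, hs]
  · change d (s _) = d p
    exact key _ _ (hs _)

theorem der_mvpoly {ι K : Type*} [Fintype ι] [Field K] [Algebra ℝ K] [Algebra (MvPolynomial ι ℝ) K]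
    [IsScalarTower ℝ (MvPolynomial ι ℝ) K] (d : Derivation ℝ (MvPolynomial ι ℝ) K)
    (p : MvPolynomial ι ℝ) :
    d p = ∑ j, algebraMap _ K (MvPolynomial.pderiv j p) * d (MvPolynomial.X j) := by
  classical
  induction p using MvPolynomial.induction_on with
  | C a => simp [MvPolynomial.derivation_C]
  | add p q hp hq => simp only [map_add, hp, hq, add_mul, Finset.sum_add_distrib]
  | mul_X p i hp =>
    simp only [Derivation.leibniz, map_add, add_mul, Finset.sum_add_distrib, hp, smul_eq_mul, map_mul,
      Algebra.smul_def, MvPolynomial.pderiv_X, Finset.mul_sum, mul_assoc]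
    congr 1
    rw [Finset.sum_eq_single i]
    · simp
    · intro j _ hj; simp [Pi.single_apply, hj.symm]
    · simp

theorem hasFDerivAt_mvpoly {ι : Type*} [Fintype ι] (p : MvPolynomial ι ℝ) (q : ι → ℝ) :
    HasFDerivAt (fun x : ι → ℝ => MvPolynomial.eval x p)
      (∑ j, MvPolynomial.eval q (MvPolynomial.pderiv j p) • ContinuousLinearMap.proj (R := ℝ) (φ := fun _ : ι => ℝ) j) q := by
  classical
  induction p using MvPolynomial.induction_on with
  | C a => simpa using hasFDerivAt_const a q
  | add p r hp hr =>
    simp only [map_add, add_smul, Finset.sum_add_distrib]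
    exact hp.add hr
  | mul_X p i hp =>
    have h1 := hp.mul (hasFDerivAt_apply (𝕜 := ℝ) i q)
    simp only [map_mul, MvPolynomial.eval_X]
    refine HasFDerivAt.congr_fderiv h1 ?_
    symm
    ext w
    simp only [Derivation.leibniz, map_add, smul_eq_mul, map_mul, MvPolynomial.pderiv_X, MvPolynomial.eval_X,
      _root_.sum_apply, smul_apply, ContinuousLinearMap.proj_apply,
      add_apply, add_mul, Finset.sum_add_distrib, Finset.mul_sum, mul_assoc]
    congr 1
    · rw [Finset.sum_eq_single i]
      · simp
      · intro j _ hj; simp [Pi.single_apply, hj.symm]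
      · simp

/-- algebraic step -/
theorem alg_step {ι : Type*} [Fintype ι] (l : ι → MvPolynomial ι ℝ) (I : Ideal (MvPolynomial ι ℝ))
    [I.IsPrime] (hl : ∀ i, l i ∉ I) (G : Finset (MvPolynomial ι ℝ)) (hG : Ideal.span (G : Set _) = I)
    {K : Type*} [Field K] [Algebra ℝ K] [Algebra (MvPolynomial ι ℝ) K] [Algebra (MvPolynomial ι ℝ ⧸ I) K]
    [IsScalarTower ℝ (MvPolynomial ι ℝ) K] [IsScalarTower (MvPolynomial ι ℝ) (MvPolynomial ι ℝ ⧸ I) K]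
    [IsScalarTower ℝ (MvPolynomial ι ℝ ⧸ I) K] [IsFractionRing (MvPolynomial ι ℝ ⧸ I) K]
    (v : ι → K)
    (h1 : ∀ i, ∑ j, algebraMap _ K (MvPolynomial.pderiv j (l i)) * v j = algebraMap _ K (l i) * v i)
    (h2 : ∀ g ∈ G, ∑ j, algebraMap _ K (MvPolynomial.pderiv j g) * v j = 0) : v = 0 := by
  classical
  let P := MvPolynomial ι ℝ
  let A := P ⧸ I
  have hker : ∀ p : P, algebraMap P K p = 0 ↔ p ∈ I := by
    intro p
    rw [IsScalarTower.algebraMap_apply P A K, map_eq_zero_iff _ (IsFractionRing.injective A K)]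
    exact Ideal.Quotient.eq_zero_iff_mem
  let d0 : Derivation ℝ P K := MvPolynomial.mkDerivation ℝ v
  have hd0X : ∀ i, d0 (MvPolynomial.X i) = v i := fun i => MvPolynomial.mkDerivation_X ..
  have hd0 : ∀ p, d0 p = ∑ j, algebraMap _ K (MvPolynomial.pderiv j p) * v j := fun p => by
    rw [der_mvpoly d0]; simp only [hd0X]
  have hI : ∀ p ∈ I, d0 p = 0 := by
    intro p hp
    rw [← hG] at hp
    induction hp using Submodule.span_induction with
    | mem g hg => rw [hd0]; exact h2 g hg
    | zero => simp
    | add a b _ _ ha hb => rw [map_add, ha, hb, add_zero]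
    | smul a g hg hg0 =>
      rw [smul_eq_mul, d0.leibniz, hg0, smul_zero, Algebra.smul_def, (hker g).2 (hG ▸ hg), zero_mul, add_zero]
  obtain ⟨d1, hd1⟩ := der_descend (A := A) d0 Ideal.Quotient.mk_surjective
    (fun p hp => hI p (Ideal.Quotient.eq_zero_iff_mem.1 hp))
  have : Algebra.FormallyEtale A K := Algebra.FormallyEtale.of_isLocalization (nonZeroDivisors A)
  obtain ⟨D, hD⟩ := derivation_extend (B := K) d1
  have hDp : ∀ p : P, D (algebraMap P K p) = d0 p := fun p => by
    rw [IsScalarTower.algebraMap_apply P A K, hD, hd1]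
  have := ax_real D (fun i => algebraMap P K (MvPolynomial.X i)) (fun i => algebraMap P K (l i)) (by
    rw [eq_top_iff]
    intro a _
    obtain ⟨b, c, hc, rfl⟩ := IsFractionRing.div_surjective (A := A) a
    have : ∀ b : A, algebraMap A K b ∈ IntermediateField.adjoin ℝ
        (Set.range (fun i => algebraMap P K (MvPolynomial.X i))) := by
      intro b
      obtain ⟨p, rfl⟩ := Ideal.Quotient.mk_surjective b
      change algebraMap A K (algebraMap P A p) ∈ _
      rw [← IsScalarTower.algebraMap_apply P A K]
      induction p using MvPolynomial.induction_on with
      | C a =>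
        have : algebraMap P K (MvPolynomial.C a) = algebraMap ℝ K a := by
          rw [IsScalarTower.algebraMap_apply ℝ P K]; rfl
        rw [this]
        exact IntermediateField.algebraMap_mem _ _
      | add p q hp hq => rw [map_add]; exact add_mem hp hq
      | mul_X p i hp =>
        rw [map_mul]; exact mul_mem hp (IntermediateField.subset_adjoin _ _ ⟨i, rfl⟩)
    exact div_mem (this b) (this c)) (fun i => by rw [ne_eq, hker]; exact hl i) (fun i => by
      simp only [hDp, hd0X]
      rw [hd0, h1])
  ext i
  rw [← hd0X, ← hDp, this]; rfl


/-- injectivity over the function field implies a nondegeneracy denominator -/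
theorem denom_step {ι κ P : Type*} [Fintype ι] [DecidableEq ι] [Fintype κ] [CommRing P] (I : Ideal P) [I.IsPrime]
    (M : Matrix κ ι P)
    (hM : ∀ v : ι → FractionRing (P ⧸ I), (∀ k, ∑ j, algebraMap P (FractionRing (P ⧸ I)) (M k j) * v j = 0) → v = 0) :
    ∃ (δ : P) (N : ι → κ → P), δ ∉ I ∧ ∀ i j, ∑ k, N i k * M k j - (if i = j then δ else 0) ∈ I := by
  classical
  let A := P ⧸ I
  let K := FractionRing A
  have hker : ∀ p : P, algebraMap P K p = 0 ↔ p ∈ I := by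
    intro p
    rw [IsScalarTower.algebraMap_apply P A K, map_eq_zero_iff _ (IsFractionRing.injective A K)]
    exact Ideal.Quotient.eq_zero_iff_mem
  let MK : Matrix κ ι K := M.map (algebraMap P K)
  have hk : LinearMap.ker (Matrix.toLin' MK) = ⊥ := by
    rw [LinearMap.ker_eq_bot']
    intro v hv
    apply hM
    intro k
    have := congrFun hv k
    simpa [Matrix.toLin'_apply, Matrix.mulVec, dotProduct, MK] using this
  obtain ⟨g, hg⟩ := LinearMap.exists_leftInverse_of_injective _ hk
  let NK : Matrix ι κ K := LinearMap.toMatrix' g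
  have hNM : NK * MK = 1 := by
    have := congrArg LinearMap.toMatrix' hg
    rw [LinearMap.toMatrix'_comp, LinearMap.toMatrix'_toLin', LinearMap.toMatrix'_id] at this
    exact this
  obtain ⟨b, hb⟩ := IsLocalization.exist_integer_multiples_of_finite (nonZeroDivisors A)
    (fun p : ι × κ => NK p.1 p.2)
  choose n hn using hb
  choose s hs using (Ideal.Quotient.mk_surjective : Function.Surjective (Ideal.Quotient.mk I))
  have hs' : ∀ a : A, algebraMap P K (s a) = algebraMap A K a := by
    intro a
    rw [IsScalarTower.algebraMap_apply P A K]
    exact congrArg _ (hs a)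
  refine ⟨s b, fun i k => s (n (i, k)), ?_, ?_⟩
  · rw [← hker, hs', map_eq_zero_iff _ (IsFractionRing.injective A K)]
    exact nonZeroDivisors.ne_zero b.2
  · intro i j
    rw [← hker]
    have h1 := congrFun (congrFun hNM i) j
    rw [Matrix.mul_apply] at h1
    have h2 : ∀ k, algebraMap A K (n (i, k)) = algebraMap A K b * NK i k := by
      intro k
      rw [hn (i, k), Algebra.smul_def]
    simp only [map_sub, map_sum, map_mul, hs', h2]
    have h3 : ∀ k, algebraMap A K b * NK i k * algebraMap P K (M k j) = algebraMap A K b * (NK i k * MK k j) := by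
      intro k; simp only [MK, Matrix.map_apply]; ring
    simp only [h3, ← Finset.mul_sum, h1, Matrix.one_apply]
    split_ifs
    · rw [hs']; simp
    · simp

theorem isolated_step {ι : Type*} [Fintype ι] (l : ι → MvPolynomial ι ℝ) (G : Finset (MvPolynomial ι ℝ))
    (T : Set (ι → ℝ)) (hT : ∀ q ∈ T, ∀ i, Real.exp (q i) = MvPolynomial.eval q (l i))
    (hTG : ∀ q ∈ T, ∀ g ∈ G, MvPolynomial.eval q g = 0)
    (hinj : ∀ q ∈ T, ∀ w : ι → ℝ,
      (∀ i, ∑ j, MvPolynomial.eval q (MvPolynomial.pderiv j (l i)) * w j = MvPolynomial.eval q (l i) * w i) →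
      (∀ g ∈ G, ∑ j, MvPolynomial.eval q (MvPolynomial.pderiv j g) * w j = 0) → w = 0) :
    T.Countable := by
  classical
  have hdisc : DiscreteTopology T := by
    rw [discreteTopology_subtype_iff]
    intro q hq
    let F : (ι → ℝ) → (ι ⊕ G) → ℝ := fun x k => Sum.elim
      (fun i => Real.exp (x i) - MvPolynomial.eval x (l i)) (fun g : G => MvPolynomial.eval x (g : MvPolynomial ι ℝ)) k
    let pr : ι → ((ι → ℝ) →L[ℝ] ℝ) := fun i => ContinuousLinearMap.proj (R := ℝ) (φ := fun _ : ι => ℝ) i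
    let F' : (ι → ℝ) →L[ℝ] ((ι ⊕ G) → ℝ) := ContinuousLinearMap.pi fun k => Sum.elim
      (fun i => Real.exp (q i) • pr i - ∑ j, MvPolynomial.eval q (MvPolynomial.pderiv j (l i)) • pr j)
      (fun g : G => ∑ j, MvPolynomial.eval q (MvPolynomial.pderiv j (g : MvPolynomial ι ℝ)) • pr j) k
    have hF : HasFDerivAt F F' q := by
      rw [hasFDerivAt_pi']
      rintro (i | g)
      · exact ((hasFDerivAt_apply (𝕜 := ℝ) i q).exp).sub (hasFDerivAt_mvpoly (l i) q)
      · exact hasFDerivAt_mvpoly (g : MvPolynomial ι ℝ) q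
    have hker : LinearMap.ker (F' : (ι → ℝ) →ₗ[ℝ] ((ι ⊕ G) → ℝ)) = ⊥ := by
      rw [LinearMap.ker_eq_bot']
      intro w hw
      apply hinj q hq w
      · intro i
        have := congrFun hw (Sum.inl i)
        have h2 : Real.exp (q i) * w i - ∑ j, MvPolynomial.eval q (MvPolynomial.pderiv j (l i)) * w j = 0 := by
          simpa [F', pr, _root_.sum_apply] using this
        rw [← hT q hq]; linarith
      · intro g hg
        have := congrFun hw (Sum.inr ⟨g, hg⟩)
        simpa [F', pr, _root_.sum_apply] using this
    obtain ⟨c, _, hc⟩ := LinearMap.exists_antilipschitzWith _ hker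
    have h1 := hF.eventually_ne (c := 0) ⟨c, hc⟩
    rw [Filter.inf_principal_eq_bot]
    filter_upwards [h1] with z hz hzT
    apply hz
    ext k
    rcases k with i | g
    · simp [F, hT z hzT i]
    · simpa [F] using hTG z hzT g g.2
  have : Countable T := countable_of_Lindelof_of_discrete
  exact Set.countable_coe_iff.1 this

theorem exp_poly_countable {ι : Type*} [Fintype ι] (l : ι → MvPolynomial ι ℝ) :
    {q : ι → ℝ | ∀ i, Real.exp (q i) = MvPolynomial.eval q (l i)}.Countable := by
  classical
  set S := {q : ι → ℝ | ∀ i, Real.exp (q i) = MvPolynomial.eval q (l i)} with hS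
  by_contra hSc
  let van : Set (ι → ℝ) → Ideal (MvPolynomial ι ℝ) := fun T => MvPolynomial.vanishingIdeal ℝ T
  have hvan : ∀ T p, p ∈ van T ↔ ∀ q ∈ T, MvPolynomial.eval q p = 0 := by
    intro T p
    simp [van, MvPolynomial.mem_vanishingIdeal_iff, MvPolynomial.aeval_eq_eval]
  obtain ⟨I, ⟨T, hTS, hTc, rfl⟩, hmax⟩ := set_has_maximal_iff_noetherian.2
    (inferInstance : IsNoetherian (MvPolynomial ι ℝ) (MvPolynomial ι ℝ))
    {I | ∃ T, T ⊆ S ∧ ¬ T.Countable ∧ van T = I} ⟨_, S, subset_rfl, hSc, rfl⟩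
  have hfc : ∀ f, f ∉ van T → {q ∈ T | MvPolynomial.eval q f = 0}.Countable := by
    intro f hf
    by_contra hc
    have hlt : van T < van {q ∈ T | MvPolynomial.eval q f = 0} := by
      refine lt_of_le_not_ge (fun p hp => ?_) (fun hle => hf (hle ?_))
      · rw [hvan] at *
        exact fun q hq => hp q hq.1
      · rw [hvan]; exact fun q hq => hq.2
    exact hmax _ ⟨_, fun q hq => hTS hq.1, hc, rfl⟩ hlt
  have hTne : T.Nonempty := by
    by_contra h
    rw [Set.not_nonempty_iff_eq_empty] at h
    exact hTc (by simp [h])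
  have hprime : (van T).IsPrime := by
    refine ⟨?_, ?_⟩
    · rw [Ideal.ne_top_iff_one, hvan]
      obtain ⟨q, hq⟩ := hTne
      intro h
      simpa using h q hq
    · intro f g hfg
      by_contra! h
      apply hTc
      refine ((hfc f h.1).union (hfc g h.2)).mono fun q hq => ?_
      have := (hvan _ _).1 hfg q hq
      rw [map_mul, mul_eq_zero] at this
      exact this.imp (fun h => ⟨hq, h⟩) (fun h => ⟨hq, h⟩)
  have hl : ∀ i, l i ∉ van T := by
    intro i h
    obtain ⟨q, hq⟩ := hTne
    have h1 := (hvan _ _).1 h q hq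
    rw [← hTS hq i] at h1
    exact (Real.exp_pos _).ne' h1
  obtain ⟨G, hG⟩ := (inferInstance : IsNoetherianRing (MvPolynomial ι ℝ)).noetherian (van T)
  let M : Matrix (ι ⊕ G) ι (MvPolynomial ι ℝ) := fun k j => Sum.elim
    (fun i => MvPolynomial.pderiv j (l i) - (if i = j then l i else 0))
    (fun g : G => MvPolynomial.pderiv j (g : MvPolynomial ι ℝ)) k
  obtain ⟨δ, N, hδ, hN⟩ := denom_step (van T) M (by
    intro v hv
    refine alg_step l (van T) hl G hG v (fun i => ?_) (fun g hg => ?_)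
    · have := hv (Sum.inl i)
      simp only [M, Sum.elim_inl, map_sub, sub_mul, Finset.sum_sub_distrib] at this
      rw [sub_eq_zero] at this
      rw [this, Finset.sum_eq_single i]
      · rw [if_pos rfl]
      · intro j _ hj; rw [if_neg hj.symm, map_zero, zero_mul]
      · exact fun h => absurd (Finset.mem_univ i) h
    · exact hv (Sum.inr ⟨g, hg⟩))
  have hcount : {q ∈ T | MvPolynomial.eval q δ ≠ 0}.Countable := by
    refine isolated_step l G _ (fun q hq => hTS hq.1) (fun q hq g hg => ?_) (fun q hq w h1 h2 => ?_)
    · exact (hvan T g).1 (hG ▸ Submodule.subset_span hg) q hq.1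
    · have hMw : ∀ k, ∑ j, MvPolynomial.eval q (M k j) * w j = 0 := by
        rintro (i | g)
        · simp only [M, Sum.elim_inl, map_sub, sub_mul, Finset.sum_sub_distrib, h1]
          rw [Finset.sum_eq_single i]
          · simp
          · intro j _ hj; simp [hj.symm]
          · simp
        · exact h2 g g.2
      ext i
      have h3 : ∀ j, ∑ k, MvPolynomial.eval q (N i k) * MvPolynomial.eval q (M k j) =
          if i = j then MvPolynomial.eval q δ else 0 := by
        intro j
        have := (hvan _ _).1 (hN i j) q hq.1
        rw [map_sub, sub_eq_zero, map_sum] at this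
        simp only [map_mul] at this
        rw [this]
        split_ifs <;> simp
      have h4 : MvPolynomial.eval q δ * w i = 0 := by
        calc MvPolynomial.eval q δ * w i = ∑ j, (if i = j then MvPolynomial.eval q δ else 0) * w j := by simp
          _ = ∑ j, ∑ k, MvPolynomial.eval q (N i k) * (MvPolynomial.eval q (M k j) * w j) := by
            refine Finset.sum_congr rfl fun j _ => ?_
            rw [← h3, Finset.sum_mul]
            exact Finset.sum_congr rfl fun k _ => mul_assoc _ _ _
          _ = 0 := by
            rw [Finset.sum_comm]
            simp only [← Finset.mul_sum, hMw, mul_zero, Finset.sum_const_zero]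
      simpa [hq.2] using h4
  apply hTc
  refine (hcount.union (hfc δ hδ)).mono fun q hq => ?_
  by_cases h : MvPolynomial.eval q δ = 0
  · exact Or.inr ⟨hq, h⟩
  · exact Or.inl ⟨hq, h⟩


theorem opL_eq [Fintype V] [DecidableEq V] (μ : V → ℝ) (W : V → V → ℝ) (u : V → ℝ) (x : V) :
    opL μ W u x = (1 / μ x) * ∑ y, W x y * (u x - u y) := by
  unfold opL
  congr 1
  rw [Finset.sum_filter]
  refine Finset.sum_congr rfl fun y _ => ?_
  split_ifs with h
  · rfl
  · push Not at h; simp [h]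

theorem energy_eq [Fintype V] [DecidableEq V] (μ : V → ℝ) (W : V → V → ℝ) (hμ : ∀ x, 0 < μ x)
    (hWsym : ∀ x y, W x y = W y x) (u v : V → ℝ) :
    ∑ x, μ x * (v x * opL μ W u x) = (1 / 2) * ∑ x, ∑ y, W x y * ((u x - u y) * (v x - v y)) := by
  have h1 : ∀ x, μ x * (v x * opL μ W u x) = ∑ y, W x y * (u x - u y) * v x := by
    intro x
    rw [opL_eq, ← Finset.sum_mul]
    have := (hμ x).ne'
    field_simp
  have h2 : ∑ x, ∑ y, W x y * (u x - u y) * v x = ∑ x, ∑ y, W x y * (u y - u x) * v y := by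
    rw [Finset.sum_comm]
    refine Finset.sum_congr rfl fun x _ => Finset.sum_congr rfl fun y _ => ?_
    rw [hWsym]
  have h3 : ∑ x, ∑ y, W x y * ((u x - u y) * (v x - v y)) =
      ∑ x, ∑ y, W x y * (u x - u y) * v x + ∑ x, ∑ y, W x y * (u y - u x) * v y := by
    rw [← Finset.sum_add_distrib]
    refine Finset.sum_congr rfl fun x _ => ?_
    rw [← Finset.sum_add_distrib]
    refine Finset.sum_congr rfl fun y _ => ?_
    ring
  simp only [h1]
  rw [h3, ← h2]; ring

theorem energy_zero [Fintype V] (W : V → V → ℝ)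
    (hWpos : ∀ x y, x ≠ y → 0 < W x y) (u : V → ℝ)
    (h : ∑ x, ∑ y, W x y * ((u x - u y) * (u x - u y)) = 0) (x y : V) : u x = u y := by
  classical
  have hnn : ∀ x y, 0 ≤ W x y * ((u x - u y) * (u x - u y)) := by
    intro x y
    by_cases hxy : x = y
    · simp [hxy]
    · exact mul_nonneg (hWpos x y hxy).le (mul_self_nonneg _)
  have h1 := (Finset.sum_eq_zero_iff_of_nonneg (fun x _ => Finset.sum_nonneg fun y _ => hnn x y)).1 h x
    (Finset.mem_univ _)
  have h2 := (Finset.sum_eq_zero_iff_of_nonneg (fun y _ => hnn x y)).1 h1 y (Finset.mem_univ _)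
  by_contra hne
  have hxy : x ≠ y := fun h => hne (by rw [h])
  have := (hWpos x y hxy).ne'
  have h3 : u x - u y ≠ 0 := sub_ne_zero.2 hne
  simp [this, h3] at h2

theorem crit_countable_aux [Fintype V] [DecidableEq V] (μ : V → ℝ) (W : V → V → ℝ)
    (hμ : ∀ x, 0 < μ x) (hWsym : ∀ x y, W x y = W y x) (hWpos : ∀ x y, x ≠ y → 0 < W x y)
    (a : ℝ) (b : V → ℝ) (hb : ∃ x, b x ≠ 0) :
    {q : V → ℝ | ∀ x, opL μ W q x + a = b x * Real.exp (q x)}.Countable := by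
  classical
  let L : (V → ℝ) →ₗ[ℝ] (V → ℝ) :=
    { toFun := opL μ W
      map_add' := fun u v => by
        ext x
        simp only [opL_eq, Pi.add_apply, ← mul_add, ← Finset.sum_add_distrib]
        congr 1
        exact Finset.sum_congr rfl fun y _ => by ring
      map_smul' := fun c u => by
        ext x
        simp only [opL_eq, Pi.smul_apply, smul_eq_mul, RingHom.id_apply]
        rw [mul_left_comm]; simp only [Finset.mul_sum]
        exact Finset.sum_congr rfl fun y _ => by ring }
  have hL : ∀ q x, L q x = opL μ W q x := fun _ _ => rfl
  let Φ : (V → ℝ) →ₗ[ℝ] (V → ℝ) := LinearMap.pi fun x =>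
    if b x ≠ 0 then LinearMap.proj x else LinearMap.proj x ∘ₗ L
  have hΦ1 : ∀ q x, b x ≠ 0 → Φ q x = q x := fun q x hx => by simp [Φ, hx]
  have hΦ2 : ∀ q x, b x = 0 → Φ q x = opL μ W q x := fun q x hx => by simp [Φ, hx, hL]
  have hinj : Function.Injective Φ := by
    rw [injective_iff_map_eq_zero]
    intro q hq
    have hq' : ∀ x, Φ q x = 0 := fun x => congrFun hq x
    have h1 : ∑ x, μ x * (q x * opL μ W q x) = 0 := by
      refine Finset.sum_eq_zero fun x _ => ?_
      by_cases hx : b x = 0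
      · rw [← hΦ2 q x hx, hq']; simp
      · rw [← hΦ1 q x hx, hq']; simp
    rw [energy_eq μ W hμ hWsym] at h1
    have h2 := energy_zero W hWpos q (by linarith)
    obtain ⟨x0, hx0⟩ := hb
    ext x
    rw [h2 x x0, ← hΦ1 q x0 hx0, hq' x0]; rfl
  let e := LinearEquiv.ofInjectiveEndo Φ hinj
  have he : ∀ q, e.symm (Φ q) = q := fun q => e.symm_apply_apply q
  let N : (V → ℝ) →ₗ[ℝ] (V → ℝ) := L ∘ₗ e.symm.toLinearMap
  let l : V → MvPolynomial V ℝ := fun x =>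
    if b x = 0 then MvPolynomial.C (Real.exp (-a)) else
      MvPolynomial.C (1 / b x) * (MvPolynomial.C a + ∑ j, MvPolynomial.C (N (Pi.single j 1) x) * MvPolynomial.X j)
  have hN : ∀ y x, N y x = ∑ j, N (Pi.single j 1) x * y j := by
    intro y x
    conv_lhs => rw [pi_eq_sum_univ' y]
    rw [map_sum, Finset.sum_apply]
    refine Finset.sum_congr rfl fun j _ => ?_
    rw [map_smul, Pi.smul_apply, smul_eq_mul, mul_comm]
  refine Set.MapsTo.countable_of_injOn (f := Φ) (fun q hq => ?_) hinj.injOn (exp_poly_countable l)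
  intro x
  have hqx : opL μ W q x + a = b x * Real.exp (q x) := hq x
  by_cases hx : b x = 0
  · rw [hΦ2 q x hx]
    simp only [l, hx, if_true, MvPolynomial.eval_C]
    rw [hx] at hqx
    congr 1; linarith
  · rw [hΦ1 q x hx]
    simp only [l, hx, if_false, map_mul, map_add, map_sum, MvPolynomial.eval_C, MvPolynomial.eval_X]
    rw [← hN]
    have : N (Φ q) x = opL μ W q x := by
      change L (e.symm (Φ q)) x = _
      rw [he]; rfl
    rw [this, add_comm a, hqx]
    field_simp

theorem crit_countable [Fintype V] [Nonempty V] [DecidableEq V] (μ : V → ℝ) (W : V → V → ℝ)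
    (hμ : ∀ x, 0 < μ x) (hWsym : ∀ x y, W x y = W y x) (hWpos : ∀ x y, x ≠ y → 0 < W x y)
    (ρ : ℝ) (hρ : 0 < ρ) (h : V → ℝ) (hh : ∃ x, h x ≠ 0) (c : ℝ) :
    {p : V → ℝ | (∀ x, opL μ W p x =
        ρ * (h x * Real.exp (p x) / intV μ (fun y => h y * Real.exp (p y)) - 1 / volV μ)) ∧
      intV μ (fun y => h y * Real.exp (p y)) ≠ 0 ∧ intV μ (fun y => Real.exp (p y)) = c}.Countable := by
  have key : ∀ σ : ℝ, σ ≠ 0 → {q : V → ℝ | ∀ x, opL μ W q x + ρ / volV μ = (ρ * σ * h x) * Real.exp (q x)}.Countable := by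
    intro σ hσ
    refine crit_countable_aux μ W hμ hWsym hWpos _ _ ?_
    obtain ⟨x, hx⟩ := hh
    exact ⟨x, mul_ne_zero (mul_ne_zero hρ.ne' hσ) hx⟩
  let lam : (V → ℝ) → ℝ := fun p => intV μ (fun y => h y * Real.exp (p y))
  let f : (V → ℝ) → (V → ℝ) := fun p x => p x - Real.log |lam p|
  have hexp : ∀ p, lam p ≠ 0 → ∀ x, Real.exp (p x) = |lam p| * Real.exp (f p x) := by
    intro p hp x
    have : 0 < |lam p| := abs_pos.2 hp
    simp only [f]
    rw [Real.exp_sub, Real.exp_log this]; field_simp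
  refine Set.MapsTo.countable_of_injOn (f := f) (fun p hp => ?_) ?_
    ((key 1 one_ne_zero).union (key (-1) (by norm_num)))
  · obtain ⟨h1, h2, -⟩ := hp
    have hL : ∀ x, opL μ W (f p) x = opL μ W p x := by
      intro x
      simp only [opL_eq, f, sub_sub_sub_cancel_right]
    have h2' : lam p ≠ 0 := h2
    have h1' : ∀ x, opL μ W p x = ρ * (h x * Real.exp (p x) / lam p - 1 / volV μ) := h1
    rcases lt_or_gt_of_ne h2' with hlt | hgt
    · right
      intro x
      rw [hL, h1', hexp p h2', abs_of_neg hlt]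
      field_simp
      ring
    · left
      intro x
      rw [hL, h1', hexp p h2', abs_of_pos hgt]
      field_simp
      ring
  · intro p hp p' hp' hff
    obtain ⟨-, h2, h3⟩ := hp
    obtain ⟨-, h2', h3'⟩ := hp'
    have h2a : lam p ≠ 0 := h2
    have h2b : lam p' ≠ 0 := h2'
    have e1 : ∀ p, lam p ≠ 0 → intV μ (fun y => Real.exp (p y)) = |lam p| * intV μ (fun y => Real.exp (f p y)) := by
      intro p hp
      unfold intV
      rw [Finset.mul_sum]
      refine Finset.sum_congr rfl fun x _ => ?_
      beta_reduce
      rw [hexp p hp x]; ring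
    have hpos : 0 < intV μ (fun y => Real.exp (f p y)) :=
      Finset.sum_pos (fun x _ => mul_pos (hμ x) (Real.exp_pos _)) Finset.univ_nonempty
    have e2 : |lam p| = |lam p'| := by
      have := (e1 p h2a).symm.trans (h3.trans (h3'.symm.trans (e1 p' h2b)))
      rw [← hff] at this
      exact mul_right_cancel₀ hpos.ne' this
    ext x
    have := congrFun hff x
    simp only [f, e2] at this
    linarith


theorem tendsto_of_countable_cluster [Finite V] (u : ℝ → V → ℝ)
    (hu : ∀ x, ContinuousOn (fun t => u t x) (Set.Ici 0))
    (K : Set (V → ℝ)) (hK : IsCompact K) (huK : ∀ t, 0 ≤ t → u t ∈ K)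
    (S : Set (V → ℝ)) (hS : S.Countable) (hcl : ∀ p, MapClusterPt p Filter.atTop u → p ∈ S) :
    ∃ p, Filter.Tendsto u Filter.atTop (nhds p) := by
  have key : ∀ x, ∃ c, Filter.Tendsto (fun t => u t x) Filter.atTop (nhds c) := by
    intro x
    have hKx : IsCompact ((fun p : V → ℝ => p x) '' K) := hK.image (continuous_apply x)
    obtain ⟨B, hB⟩ := hKx.bddAbove
    obtain ⟨A, hA⟩ := hKx.bddBelow
    refine tendsto_of_no_upcrossings (s := Set.univ) dense_univ ?_ ?_ ?_
    · intro a _ b _ hab ⟨hfa, hfb⟩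
      have hsub : Set.Ioo a b ⊆ (fun p : V → ℝ => p x) '' S := by
        intro c hc
        have hfr : ∃ᶠ t in Filter.atTop, u t x = c := by
          rw [Filter.frequently_atTop]
          intro T
          obtain ⟨t1, ht1, h1⟩ := (Filter.frequently_atTop.1 hfa) (max T 0)
          obtain ⟨t2, ht2, h2⟩ := (Filter.frequently_atTop.1 hfb) t1
          have ht10 : 0 ≤ t1 := le_trans (le_max_right _ _) ht1
          have := intermediate_value_Icc ht2 ((hu x).mono fun s hs => le_trans ht10 hs.1)
          obtain ⟨s, hs, hsc⟩ := this ⟨(h1.trans hc.1).le, (hc.2.trans h2).le⟩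
          exact ⟨s, le_trans (le_trans (le_max_left _ _) ht1) hs.1, hsc⟩
        let F : Filter ℝ := Filter.atTop ⊓ Filter.principal {t | u t x = c}
        have hF : F.NeBot := Filter.frequently_mem_iff_neBot.1 hfr
        have hFK : Filter.map u F ≤ Filter.principal K := by
          rw [Filter.le_principal_iff, Filter.mem_map]
          exact Filter.mem_inf_of_left ((Filter.eventually_ge_atTop 0).mono huK)
        obtain ⟨p, hp, hpc⟩ := hK hFK
        refine ⟨p, hcl p (ClusterPt.mono hpc (Filter.map_mono inf_le_left)), ?_⟩
        have hcl : IsClosed {p : V → ℝ | p x = c} := isClosed_eq (continuous_apply x) continuous_const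
        refine isClosed_iff_clusterPt.1 hcl p (ClusterPt.mono hpc ?_)
        rw [Filter.le_principal_iff, Filter.mem_map]
        exact Filter.mem_inf_of_right (Filter.mem_principal_self _)
      have h1 : (Set.Ioo a b).Countable := (hS.image _).mono hsub
      exact (Cardinal.Real.Ioo_countable_iff.1 h1).not_gt hab
    · exact ⟨B, Filter.eventually_map.2 ((Filter.eventually_ge_atTop 0).mono fun t ht => hB ⟨_, huK t ht, rfl⟩)⟩
    · exact ⟨A, Filter.eventually_map.2 ((Filter.eventually_ge_atTop 0).mono fun t ht => hA ⟨_, huK t ht, rfl⟩)⟩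
  choose p hp using key
  exact ⟨p, tendsto_pi_nhds.2 hp⟩

theorem cluster_zero {E : Type*} [PseudoMetricSpace E] (u : ℝ → E) (J : ℝ → ℝ) (g : E → ℝ) (C : ℝ)
    (hC : 0 < C) (hlip : ∀ t s, 0 ≤ t → t ≤ s → dist (u s) (u t) ≤ C * (s - t))
    (hJ : ∀ t, 0 ≤ t → HasDerivAt J (-g (u t)) t) (hg : ∀ t, 0 ≤ t → 0 ≤ g (u t))
    (B : ℝ) (hB : ∀ t, 0 ≤ t → B ≤ J t) (p : E) (hp : MapClusterPt p Filter.atTop u)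
    (hgp : ContinuousAt g p) : g p ≤ 0 := by
  by_contra! hpos
  have mvt : ∀ t s, 0 ≤ t → t < s → ∃ ξ ∈ Set.Ioo t s, J s - J t = -g (u ξ) * (s - t) := by
    intro t s ht hts
    obtain ⟨ξ, hξ, h⟩ := exists_hasDerivAt_eq_slope J (fun r => -g (u r)) hts
      (fun r hr => (hJ r (ht.trans hr.1)).continuousAt.continuousWithinAt)
      (fun r hr => hJ r (ht.trans hr.1.le))
    refine ⟨ξ, hξ, ?_⟩
    rw [h]
    have : s - t ≠ 0 := (sub_pos.2 hts).ne'
    field_simp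
  have hanti : ∀ t s, 0 ≤ t → t ≤ s → J s ≤ J t := by
    intro t s ht hts
    rcases hts.eq_or_lt with rfl | hts
    · exact le_rfl
    obtain ⟨ξ, hξ, h⟩ := mvt t s ht hts
    nlinarith [hg ξ (ht.trans hξ.1.le)]
  obtain ⟨r, hr, hball⟩ := Metric.eventually_nhds_iff.1 (hgp.eventually (lt_mem_nhds (half_lt_self hpos)))
  let δ := r / (2 * C)
  have hδ : 0 < δ := by positivity
  let ε := g p / 2 * δ
  have hε : 0 < ε := by positivity
  have hbdd : BddBelow (J '' Set.Ici 0) := ⟨B, by rintro _ ⟨t, ht, rfl⟩; exact hB t ht⟩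
  obtain ⟨_, ⟨T, hT, rfl⟩, hlt⟩ := exists_lt_of_csInf_lt (s := J '' Set.Ici 0) ⟨_, 0, by simp, rfl⟩
    (lt_add_of_pos_right (sInf (J '' Set.Ici 0)) hε)
  have hfr := hp.frequently (Metric.ball_mem_nhds p (half_pos hr))
  obtain ⟨t, htT, ht⟩ := Filter.frequently_atTop.1 hfr T
  have hT0 : (0 : ℝ) ≤ T := hT
  have ht0 : 0 ≤ t := hT0.trans htT
  obtain ⟨ξ, hξ, h⟩ := mvt t (t + δ) ht0 (by linarith)
  have h1 : sInf (J '' Set.Ici 0) ≤ J (t + δ) := csInf_le hbdd ⟨t + δ, by simp; linarith, rfl⟩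
  have h2 := hanti T t hT0 htT
  have h3 : g p / 2 < g (u ξ) := by
    apply hball
    have e1 := hlip t ξ ht0 hξ.1.le
    have e2 : C * (ξ - t) < r / 2 := by
      calc C * (ξ - t) < C * δ := by
            apply mul_lt_mul_of_pos_left _ hC
            linarith [hξ.2]
        _ = r / 2 := by simp only [δ]; field_simp
    have e3 : dist (u t) p < r / 2 := ht
    linarith [dist_triangle (u ξ) (u t) p]
  have h4 : t + δ - t = δ := by ring
  rw [h4] at h
  have h5 : g p / 2 * δ < g (u ξ) * δ := mul_lt_mul_of_pos_right h3 hδ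
  simp only [ε] at hlt
  linarith


theorem lower_bound_aux (w ρ b J s t : ℝ) (hw : 0 < w) (hρ : 0 < ρ) (hbt : b ≤ t)
    (h : 1 / 4 * w * (t - s) ^ 2 + ρ * s ≤ J) :
    b - (4 * (ρ + 1) / w + |J - ρ * b|) ≤ s := by
  by_contra! hlt
  have h0 : 0 < 4 * (ρ + 1) / w := by positivity
  have hr1 : 4 * (ρ + 1) / w < b - s := by linarith [abs_nonneg (J - ρ * b)]
  have hr2 : J - ρ * b < b - s := by linarith [le_abs_self (J - ρ * b)]
  have h1 : 4 * (ρ + 1) < w * (b - s) := by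
    rw [div_lt_iff₀ hw] at hr1; linarith
  have h2 : (b - s) ^ 2 ≤ (t - s) ^ 2 := by
    apply pow_le_pow_left₀ <;> linarith
  have h3 : w * (b - s) ^ 2 ≤ w * (t - s) ^ 2 := mul_le_mul_of_nonneg_left h2 hw.le
  have h4 : 4 * (ρ + 1) * (b - s) ≤ w * (b - s) * (b - s) :=
    mul_le_mul_of_nonneg_right h1.le (by linarith)
  nlinarith

theorem exists_min_weight [Finite V] (W : V → V → ℝ) (hWpos : ∀ x y, x ≠ y → 0 < W x y) :
    ∃ w : ℝ, 0 < w ∧ ∀ x y, x ≠ y → w ≤ W x y := by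
  classical
  have := Fintype.ofFinite V
  by_cases hne : (Finset.univ : Finset V).offDiag.Nonempty
  · obtain ⟨p, hp, hmin⟩ := Finset.exists_min_image _ (fun p : V × V => W p.1 p.2) hne
    refine ⟨W p.1 p.2, hWpos _ _ (Finset.mem_offDiag.1 hp).2.2, fun x y hxy => ?_⟩
    exact hmin (x, y) (by simp [hxy])
  · refine ⟨1, one_pos, fun x y hxy => absurd ⟨(x, y), by simp [hxy]⟩ hne⟩

theorem flow_main [Fintype V] [Nonempty V] [DecidableEq V]
    (μ : V → ℝ) (W : V → V → ℝ)
    (hμ : ∀ x, 0 < μ x)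
    (hWsym : ∀ x y, W x y = W y x)
    (hWpos : ∀ x y, x ≠ y → 0 < W x y)
    (ρ : ℝ) (hρ : 0 < ρ)
    (h : V → ℝ) (hpos : ∃ x, 0 < h x)
    (u : ℝ → V → ℝ)
    (hne : ∀ t ∈ Set.Ici (0 : ℝ), intV μ (fun y => h y * Real.exp (u t y)) ≠ 0)
    (hflow : ∀ x, ∀ t ∈ Set.Ici (0 : ℝ),
      HasDerivAt (fun s => Real.exp (u s x))
        (-(opL μ W (u t) x) +
          ρ * (h x * Real.exp (u t x) / intV μ (fun y => h y * Real.exp (u t y)) - 1 / volV μ))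
        t) :
    ∃ p : V → ℝ, Filter.Tendsto u Filter.atTop (nhds p) ∧
      ∀ x, opL μ W p x =
        ρ * (h x * Real.exp (p x) / intV μ (fun y => h y * Real.exp (p y)) - 1 / volV μ) := by
  let lam : (V → ℝ) → ℝ := fun p => intV μ (fun y => h y * Real.exp (p y))
  let F : (V → ℝ) → V → ℝ := fun p x => -(opL μ W p x) + ρ * (h x * Real.exp (p x) / lam p - 1 / volV μ)
  have hvol : 0 < volV μ := Finset.sum_pos (fun x _ => hμ x) Finset.univ_nonempty
  have hlam : ∀ t, 0 ≤ t → lam (u t) ≠ 0 := hne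
  have hexp : ∀ x t, 0 ≤ t → HasDerivAt (fun s => Real.exp (u s x)) (F (u t) x) t := hflow
  have hu : ∀ x t, 0 ≤ t → HasDerivAt (fun s => u s x) (F (u t) x / Real.exp (u t x)) t := by
    intro x t ht
    have := (hexp x t ht).log (Real.exp_pos _).ne'
    simpa only [Real.log_exp] using this
  have hlamd : ∀ t, 0 ≤ t → HasDerivAt (fun s => lam (u s)) (∑ x, μ x * (h x * F (u t) x)) t := by
    intro t ht
    exact HasDerivAt.fun_sum fun x _ => ((hexp x t ht).const_mul (h x)).const_mul (μ x)
  -- conservation of mass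
  let mass : ℝ → ℝ := fun t => intV μ (fun y => Real.exp (u t y))
  have hFsum : ∀ p, lam p ≠ 0 → ∑ x, μ x * F p x = 0 := by
    intro p hp
    have e1 : ∑ x, μ x * (1 * opL μ W p x) = 0 := by
      rw [energy_eq μ W hμ hWsym p (fun _ => 1)]; simp
    have e2 : ∀ x, μ x * F p x = -(μ x * (1 * opL μ W p x)) + ρ / lam p * (μ x * (h x * Real.exp (p x)))
        - ρ / volV μ * μ x := by
      intro x; simp only [F]; ring
    simp only [e2, Finset.sum_sub_distrib, Finset.sum_add_distrib, Finset.sum_neg_distrib, e1, ← Finset.mul_sum]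
    have e3 : ∑ x, μ x * (h x * Real.exp (p x)) = lam p := rfl
    have e4 : ∑ x, μ x = volV μ := rfl
    rw [e3, e4]
    field_simp
    ring
  have hmass : ∀ t, 0 ≤ t → HasDerivAt mass 0 t := by
    intro t ht
    have := HasDerivAt.fun_sum (u := Finset.univ) fun x _ => (hexp x t ht).const_mul (μ x)
    rw [hFsum _ (hlam t ht)] at this
    exact this
  have hmassc : ∀ t, 0 ≤ t → mass t = mass 0 := by
    intro t ht
    exact constant_of_has_deriv_right_zero
      (fun s hs => (hmass s hs.1).continuousAt.continuousWithinAt)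
      (fun s hs => (hmass s hs.1).hasDerivWithinAt) t ⟨ht, le_rfl⟩
  set m := mass 0 with hm
  have hm0 : 0 < m := Finset.sum_pos (fun x _ => mul_pos (hμ x) (Real.exp_pos _)) Finset.univ_nonempty
  -- energy
  let Jf : (V → ℝ) → ℝ := fun p => 1 / 4 * ∑ x, ∑ y, W x y * ((p x - p y) * (p x - p y)) -
    ρ * Real.log (lam p) + ρ / volV μ * ∑ x, μ x * p x
  let g : (V → ℝ) → ℝ := fun p => ∑ x, μ x * (F p x ^ 2 / Real.exp (p x))
  have hJd : ∀ t, 0 ≤ t → HasDerivAt (fun s => Jf (u s)) (-g (u t)) t := by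
    intro t ht
    let v : V → ℝ := fun x => F (u t) x / Real.exp (u t x)
    have d1 : HasDerivAt (fun s => ∑ x, ∑ y, W x y * ((u s x - u s y) * (u s x - u s y)))
        (∑ x, ∑ y, W x y * ((v x - v y) * (u t x - u t y) + (u t x - u t y) * (v x - v y))) t := by
      refine HasDerivAt.fun_sum fun x _ => HasDerivAt.fun_sum fun y _ => ?_
      have := (hu x t ht).sub (hu y t ht)
      exact (this.mul this).const_mul (W x y)
    have d2 := (hlamd t ht).log (hlam t ht)
    have d3 : HasDerivAt (fun s => ∑ x, μ x * u s x) (∑ x, μ x * v x) t :=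
      HasDerivAt.fun_sum fun x _ => (hu x t ht).const_mul (μ x)
    have d := ((d1.const_mul (1 / 4)).sub (d2.const_mul ρ)).add (d3.const_mul (ρ / volV μ))
    refine d.congr_deriv ?_
    have e1 : ∑ x, ∑ y, W x y * ((v x - v y) * (u t x - u t y) + (u t x - u t y) * (v x - v y)) =
        2 * ∑ x, ∑ y, W x y * ((u t x - u t y) * (v x - v y)) := by
      simp only [Finset.mul_sum]
      refine Finset.sum_congr rfl fun x _ => Finset.sum_congr rfl fun y _ => ?_
      ring
    have e2 := energy_eq μ W hμ hWsym (u t) v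
    have e3 : 1 / 4 * (2 * ∑ x, ∑ y, W x y * ((u t x - u t y) * (v x - v y))) =
        ∑ x, μ x * (v x * opL μ W (u t) x) := by rw [e2]; ring
    rw [e1, e3]
    simp only [g]
    rw [Finset.sum_div, Finset.mul_sum, Finset.mul_sum, ← Finset.sum_sub_distrib, ← Finset.sum_add_distrib,
      ← Finset.sum_neg_distrib]
    refine Finset.sum_congr rfl fun x _ => ?_
    have hF : F (u t) x = v x * Real.exp (u t x) := by
      simp only [v]; field_simp
    have hop : opL μ W (u t) x = ρ * (h x * Real.exp (u t x) / lam (u t) - 1 / volV μ) - F (u t) x := by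
      simp only [F]; ring
    rw [hop, hF]
    have := (Real.exp_pos (u t x)).ne'
    have := hlam t ht
    field_simp
    ring
  have hgnn : ∀ p, 0 ≤ g p := fun p =>
    Finset.sum_nonneg fun x _ => mul_nonneg (hμ x).le (div_nonneg (sq_nonneg _) (Real.exp_pos _).le)
  have hJle : ∀ t, 0 ≤ t → Jf (u t) ≤ Jf (u 0) := by
    intro t ht
    have := antitoneOn_of_deriv_nonpos (convex_Ici (0 : ℝ)) (f := fun s => Jf (u s))
      (fun s hs => (hJd s hs).continuousAt.continuousWithinAt)
      (fun s hs => (hJd s (interior_subset hs)).differentiableAt.differentiableWithinAt)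
      (fun s hs => by
        rw [(hJd s (interior_subset hs)).deriv]
        exact neg_nonpos.2 (hgnn _))
    exact this (by simp) ht ht
  -- upper bound
  obtain ⟨B, hB⟩ : ∃ B, ∀ t, 0 ≤ t → ∀ x, u t x ≤ B := by
    obtain ⟨x0, hx0⟩ := Finite.exists_max (fun x => Real.log (m / μ x))
    refine ⟨Real.log (m / μ x0), fun t ht x => le_trans ?_ (hx0 x)⟩
    rw [Real.le_log_iff_exp_le (div_pos hm0 (hμ x)), le_div_iff₀ (hμ x), ← hmassc t ht, mul_comm]
    exact Finset.single_le_sum (f := fun x => μ x * Real.exp (u t x))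
      (fun y _ => mul_nonneg (hμ y).le (Real.exp_pos _).le) (Finset.mem_univ x)
  have hb : ∀ t, 0 ≤ t → ∃ x, Real.log (m / volV μ) ≤ u t x := by
    intro t ht
    by_contra! hcon
    have : mass t < m := by
      calc mass t < ∑ x, μ x * (m / volV μ) := by
            refine Finset.sum_lt_sum_of_nonempty Finset.univ_nonempty fun x _ => ?_
            refine mul_lt_mul_of_pos_left ?_ (hμ x)
            exact (Real.lt_log_iff_exp_lt (div_pos hm0 hvol)).1 (hcon x)
        _ = m := by
            rw [← Finset.sum_mul]
            change volV μ * (m / volV μ) = m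
            field_simp
    rw [hmassc t ht] at this
    exact lt_irrefl _ this
  -- bound of lam
  obtain ⟨H, hH⟩ : ∃ H, ∀ x, |h x| ≤ H := by
    obtain ⟨x0, hx0⟩ := Finite.exists_max (fun x => |h x|)
    exact ⟨_, hx0⟩
  have hlog : ∀ t, 0 ≤ t → Real.log (lam (u t)) ≤ Real.log (H * m) := by
    intro t ht
    rw [← Real.log_abs]
    refine Real.log_le_log (abs_pos.2 (hlam t ht)) ?_
    calc |lam (u t)| ≤ ∑ x, |μ x * (h x * Real.exp (u t x))| := Finset.abs_sum_le_sum_abs _ _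
      _ ≤ ∑ x, H * (μ x * Real.exp (u t x)) := by
          refine Finset.sum_le_sum fun x _ => ?_
          rw [abs_mul, abs_mul, abs_of_pos (hμ x), abs_of_pos (Real.exp_pos _)]
          have := mul_le_mul_of_nonneg_right (hH x) (mul_pos (hμ x) (Real.exp_pos (u t x))).le
          linarith
      _ = H * m := by
          rw [← Finset.mul_sum, ← hmassc t ht]; rfl
  obtain ⟨w, hw, hwW⟩ := exists_min_weight W hWpos
  have hWnn : ∀ p : V → ℝ, ∀ x y, 0 ≤ W x y * ((p x - p y) * (p x - p y)) := by
    intro p x y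
    by_cases hxy : x = y
    · simp [hxy]
    · exact mul_nonneg (hWpos x y hxy).le (mul_self_nonneg _)
  have hWsum : ∀ p : V → ℝ, 0 ≤ ∑ x, ∑ y, W x y * ((p x - p y) * (p x - p y)) := fun p =>
    Finset.sum_nonneg fun x _ => Finset.sum_nonneg fun y _ => hWnn p x y
  have hlin : ∀ (p : V → ℝ) (s : ℝ), (∀ x, s ≤ p x) → ρ * s ≤ ρ / volV μ * ∑ x, μ x * p x := by
    intro p s hs
    have : volV μ * s ≤ ∑ x, μ x * p x := by
      unfold volV
      rw [Finset.sum_mul]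
      exact Finset.sum_le_sum fun x _ => mul_le_mul_of_nonneg_left (hs x) (hμ x).le
    calc ρ * s = ρ / volV μ * (volV μ * s) := by field_simp
      _ ≤ _ := mul_le_mul_of_nonneg_left this (by positivity)
  obtain ⟨A, hA⟩ : ∃ A, ∀ t, 0 ≤ t → ∀ x, A ≤ u t x := by
    set b := Real.log (m / volV μ) with hbdef
    set J1 := Jf (u 0) + ρ * Real.log (H * m) with hJ1
    refine ⟨b - (4 * (ρ + 1) / w + |J1 - ρ * b|), fun t ht x => ?_⟩
    obtain ⟨z, hz⟩ := Finite.exists_min (u t)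
    refine le_trans ?_ (hz x)
    obtain ⟨x0, hx0⟩ := hb t ht
    refine lower_bound_aux w ρ b J1 (u t z) (u t x0) hw hρ hx0 ?_
    have e1 := hJle t ht
    have e2 := mul_le_mul_of_nonneg_left (hlog t ht) hρ.le
    have e3 := hlin (u t) (u t z) hz
    have e4 : w * (u t x0 - u t z) ^ 2 ≤ ∑ x, ∑ y, W x y * ((u t x - u t y) * (u t x - u t y)) := by
      by_cases hxz : x0 = z
      · rw [hxz]; simpa using hWsum (u t)
      · calc w * (u t x0 - u t z) ^ 2 ≤ W x0 z * ((u t x0 - u t z) * (u t x0 - u t z)) := by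
              rw [← sq]; exact mul_le_mul_of_nonneg_right (hwW _ _ hxz) (sq_nonneg _)
          _ ≤ ∑ y, W x0 y * ((u t x0 - u t y) * (u t x0 - u t y)) :=
              Finset.single_le_sum (f := fun y => W x0 y * ((u t x0 - u t y) * (u t x0 - u t y)))
                (fun y _ => hWnn (u t) x0 y) (Finset.mem_univ z)
          _ ≤ _ := Finset.single_le_sum
                (f := fun x => ∑ y, W x y * ((u t x - u t y) * (u t x - u t y)))
                (fun x _ => Finset.sum_nonneg fun y _ => hWnn (u t) x y) (Finset.mem_univ x0)
    simp only [Jf] at e1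
    simp only [hJ1, Jf]
    linarith
  obtain ⟨c, hc, hlamlow⟩ : ∃ c, 0 < c ∧ ∀ t, 0 ≤ t → c ≤ |lam (u t)| := by
    refine ⟨Real.exp ((ρ * A - Jf (u 0)) / ρ), Real.exp_pos _, fun t ht => ?_⟩
    rw [← Real.le_log_iff_exp_le (abs_pos.2 (hlam t ht)), Real.log_abs, div_le_iff₀ hρ]
    have e1 := hJle t ht
    have e3 := hlin (u t) A (hA t ht)
    have e4 := hWsum (u t)
    have e5 : Jf (u t) = 1 / 4 * ∑ x, ∑ y, W x y * ((u t x - u t y) * (u t x - u t y)) -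
      ρ * Real.log (lam (u t)) + ρ / volV μ * ∑ x, μ x * u t x := rfl
    linarith
  have hJlow : ∀ t, 0 ≤ t → -(ρ * Real.log (H * m)) + ρ * A ≤ Jf (u t) := by
    intro t ht
    have e2 := mul_le_mul_of_nonneg_left (hlog t ht) hρ.le
    have e3 := hlin (u t) A (hA t ht)
    have e4 := hWsum (u t)
    have e5 : Jf (u t) = 1 / 4 * ∑ x, ∑ y, W x y * ((u t x - u t y) * (u t x - u t y)) -
      ρ * Real.log (lam (u t)) + ρ / volV μ * ∑ x, μ x * u t x := rfl
    linarith
  -- compact set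
  have hlamcont : Continuous lam := by
    simp only [lam, intV]; fun_prop
  have hopcont : ∀ x, Continuous (fun p => opL μ W p x) := by
    intro x; simp only [opL]; fun_prop
  have hmcont : Continuous (fun p : V → ℝ => intV μ (fun y => Real.exp (p y))) := by
    simp only [intV]; fun_prop
  let K : Set (V → ℝ) := Set.Icc (fun _ => A) (fun _ => B) ∩
    ({p | c ≤ |lam p|} ∩ {p | intV μ (fun y => Real.exp (p y)) = m})
  have hKclosed : IsClosed ({p | c ≤ |lam p|} ∩ {p | intV μ (fun y => Real.exp (p y)) = m}) :=
    (isClosed_le continuous_const hlamcont.abs).inter (isClosed_eq hmcont continuous_const)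
  have hK : IsCompact K := isCompact_Icc.inter_right hKclosed
  have hKl : ∀ p ∈ K, lam p ≠ 0 := fun p hp => abs_pos.1 (hc.trans_le hp.2.1)
  have huK : ∀ t, 0 ≤ t → u t ∈ K := fun t ht =>
    ⟨⟨fun x => hA t ht x, fun x => hB t ht x⟩, hlamlow t ht, hmassc t ht⟩
  have hFcont : ∀ p, lam p ≠ 0 → ∀ x, ContinuousAt (fun p => F p x) p := by
    intro p hp x
    refine ((hopcont x).continuousAt.neg).add (continuousAt_const.mul ((ContinuousAt.div ?_ hlamcont.continuousAt hp).sub continuousAt_const))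
    exact (continuous_const.mul (Real.continuous_exp.comp (continuous_apply x))).continuousAt
  have hvcont : ∀ p, lam p ≠ 0 → ContinuousAt (fun p => fun x => F p x / Real.exp (p x)) p := by
    intro p hp
    rw [continuousAt_pi]
    intro x
    refine (hFcont p hp x).div ?_ (Real.exp_pos _).ne'
    exact (Real.continuous_exp.comp (continuous_apply x)).continuousAt
  obtain ⟨C0, hC0⟩ := hK.exists_bound_of_continuousOn
    (f := fun p => fun x => F p x / Real.exp (p x)) (fun p hp => (hvcont p (hKl p hp)).continuousWithinAt)
  have hlip : ∀ t s, 0 ≤ t → t ≤ s → dist (u s) (u t) ≤ (|C0| + 1) * (s - t) := by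
    intro t s ht hts
    have := (convex_Ici (0 : ℝ)).norm_image_sub_le_of_norm_hasDerivWithin_le (f := u)
      (f' := fun r => fun x => F (u r) x / Real.exp (u r x)) (C := |C0| + 1)
      (fun r hr => (hasDerivAt_pi.2 fun x => hu x r hr).hasDerivWithinAt)
      (fun r hr => by
        have := hC0 _ (huK r hr)
        linarith [le_abs_self C0])
      (Set.mem_Ici.2 ht) (Set.mem_Ici.2 (ht.trans hts))
    rw [dist_eq_norm]
    rwa [Real.norm_of_nonneg (sub_nonneg.2 hts)] at this
  have hclus : ∀ p, MapClusterPt p Filter.atTop u → p ∈ {p : V → ℝ | (∀ x, opL μ W p x =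
        ρ * (h x * Real.exp (p x) / intV μ (fun y => h y * Real.exp (p y)) - 1 / volV μ)) ∧
      intV μ (fun y => h y * Real.exp (p y)) ≠ 0 ∧ intV μ (fun y => Real.exp (p y)) = m} := by
    intro p hp
    have hpK : p ∈ K := by
      refine isClosed_iff_clusterPt.1 hK.isClosed p (ClusterPt.mono hp ?_)
      rw [Filter.le_principal_iff, Filter.mem_map]
      exact (Filter.eventually_ge_atTop 0).mono huK
    have hgc : ContinuousAt g p := by
      refine tendsto_finsetSum _ fun x _ => ?_
      refine ContinuousAt.mul continuousAt_const (((hFcont p (hKl p hpK) x).pow 2).div ?_ (Real.exp_pos _).ne')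
      exact (Real.continuous_exp.comp (continuous_apply x)).continuousAt
    have hg0 := cluster_zero u (fun s => Jf (u s)) g (|C0| + 1) (by positivity) hlip hJd
      (fun t _ => hgnn _) _ hJlow p hp hgc
    have hg1 := le_antisymm hg0 (hgnn p)
    refine ⟨fun x => ?_, hKl p hpK, hpK.2.2⟩
    have := (Finset.sum_eq_zero_iff_of_nonneg (fun x _ => mul_nonneg (hμ x).le
      (div_nonneg (sq_nonneg (F p x)) (Real.exp_pos (p x)).le))).1 hg1 x (Finset.mem_univ x)
    have hF0 : F p x = 0 := by
      simpa [(hμ x).ne', (Real.exp_pos (p x)).ne'] using this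
    simp only [F] at hF0
    change opL μ W p x = ρ * (h x * Real.exp (p x) / lam p - 1 / volV μ)
    linarith
  obtain ⟨p, hp⟩ := tendsto_of_countable_cluster u
    (fun x t ht => (hu x t ht).continuousAt.continuousWithinAt) K hK huK _
    (crit_countable μ W hμ hWsym hWpos ρ hρ h (hpos.imp fun x hx => hx.ne') m) hclus
  exact ⟨p, hp, (hclus p hp.mapClusterPt).1⟩


/-- (Convergence of the first flow) The global solution of the first mean field flow converges
uniformly, as `t → +∞`, to a solution `u_∞` of the fractional mean field equation. -/
theorem first_flow_convergence [Fintype V] [Nonempty V] [DecidableEq V]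
    (μ : V → ℝ) (W : V → V → ℝ)
    (hμ : ∀ x, 0 < μ x)
    (hWsym : ∀ x y, W x y = W y x)
    (hWpos : ∀ x y, x ≠ y → 0 < W x y)
    (ρ : ℝ) (hρ : 0 < ρ)
    (h : V → ℝ) (hpos : ∃ x, 0 < h x) (hneg : ∃ x, h x < 0)
    (u₀ : V → ℝ) (hu₀ : intV μ (fun x => h x * Real.exp (u₀ x)) ≠ 0)
    (u : ℝ → V → ℝ) (hinit : u 0 = u₀)
    (hne : ∀ t ∈ Set.Ici (0 : ℝ), intV μ (fun y => h y * Real.exp (u t y)) ≠ 0)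
    (hflow : ∀ x, ∀ t ∈ Set.Ici (0 : ℝ),
      HasDerivAt (fun s => Real.exp (u s x))
        (-(opL μ W (u t) x) +
          ρ * (h x * Real.exp (u t x) / intV μ (fun y => h y * Real.exp (u t y)) - 1 / volV μ))
        t) :
    ∃ u_inf : V → ℝ,
      TendstoUniformly (fun t x => u t x) u_inf Filter.atTop ∧
      ∀ x, opL μ W u_inf x =
        ρ * (h x * Real.exp (u_inf x) / intV μ (fun y => h y * Real.exp (u_inf y)) - 1 / volV μ) := by
  obtain ⟨p, hp, hpe⟩ := flow_main μ W hμ hWsym hWpos ρ hρ h hpos u hne hflow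
  refine ⟨p, ?_, hpe⟩
  rw [Metric.tendstoUniformly_iff]
  intro ε hε
  filter_upwards [Metric.tendsto_nhds.1 hp ε hε] with t ht x
  rw [dist_comm]
  exact lt_of_le_of_lt (dist_le_pi_dist (u t) p x) ht
end

section
/- (Constraint preserved along the second flow) Let ρ > 0 and let h : V → ℝ change sign with max_{x∈V} h(x) > 0. If u : V × [0,T) → ℝ solves the second flow ∂_t u = α(t)h − R with ∫_V h e^{u(·,0)} dμ = 1, then ∫_V h e^{u(·,t)} dμ = 1 for all t ∈ [0,T). -/
open Real Finset

variable {V : Type*}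

/-- The scalar curvature type function `R = (1/ρ) e^{−u} (Lu + ρ/|V|)`. -/
noncomputable def Rcurv [Fintype V] [DecidableEq V] (μ : V → ℝ) (W : V → V → ℝ)
    (ρ : ℝ) (u : V → ℝ) (x : V) : ℝ :=
  (1 / ρ) * Real.exp (-(u x)) * (opL μ W u x + ρ / volV μ)

/-- The normalized coefficient `α = (∫_V h R e^u dμ) / (∫_V h² e^u dμ)`. -/
noncomputable def alphaC [Fintype V] [DecidableEq V] (μ : V → ℝ) (W : V → V → ℝ)
    (ρ : ℝ) (h : V → ℝ) (u : V → ℝ) : ℝ :=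
  intV μ (fun x => h x * Rcurv μ W ρ u x * Real.exp (u x)) /
    intV μ (fun x => (h x) ^ 2 * Real.exp (u x))

/-- (Constraint preserved along the second flow) If `∫_V h e^{u(·,0)} dμ = 1`, then
`∫_V h e^{u(·,t)} dμ = 1` for all `t ∈ [0,T)` along the second flow. -/
theorem second_flow_constraint [Fintype V] [Nonempty V] [DecidableEq V]
    (μ : V → ℝ) (W : V → V → ℝ)
    (hμ : ∀ x, 0 < μ x)
    (hWsym : ∀ x y, W x y = W y x)
    (hWpos : ∀ x y, x ≠ y → 0 < W x y)
    (ρ : ℝ) (hρ : 0 < ρ)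
    (h : V → ℝ) (hpos : ∃ x, 0 < h x) (hneg : ∃ x, h x < 0)
    (T : ℝ) (u : ℝ → V → ℝ)
    (hinit : intV μ (fun x => h x * Real.exp (u 0 x)) = 1)
    (hflow : ∀ x, ∀ t ∈ Set.Ico (0 : ℝ) T,
      HasDerivAt (fun s => u s x)
        (alphaC μ W ρ h (u t) * h x - Rcurv μ W ρ (u t) x) t) :
    ∀ t ∈ Set.Ico (0 : ℝ) T, intV μ (fun x => h x * Real.exp (u t x)) = 1 := by
  have key : ∀ t ∈ Set.Ico (0 : ℝ) T,
      HasDerivAt (fun s => intV μ (fun x => h x * Real.exp (u s x))) 0 t := by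
    intro t ht
    have hden : 0 < intV μ (fun x => (h x) ^ 2 * Real.exp (u t x)) := by
      obtain ⟨x0, hx0⟩ := hpos
      unfold intV
      refine Finset.sum_pos' (fun x _ => ?_) ⟨x0, Finset.mem_univ _, ?_⟩
      · have := hμ x
        positivity
      · have := hμ x0
        positivity
    have hd : HasDerivAt (fun s => ∑ x, μ x * (h x * Real.exp (u s x)))
        (∑ x, μ x * (h x * (Real.exp (u t x) *
          (alphaC μ W ρ h (u t) * h x - Rcurv μ W ρ (u t) x)))) t :=
      HasDerivAt.fun_sum fun x _ => (((hflow x t ht).exp).const_mul (h x)).const_mul (μ x)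
    have hz : (∑ x, μ x * (h x * (Real.exp (u t x) *
          (alphaC μ W ρ h (u t) * h x - Rcurv μ W ρ (u t) x)))) = 0 := by
      have h1 : alphaC μ W ρ h (u t) * intV μ (fun x => (h x) ^ 2 * Real.exp (u t x))
          = intV μ (fun x => h x * Rcurv μ W ρ (u t) x * Real.exp (u t x)) :=
        div_mul_cancel₀ _ hden.ne'
      rw [← sub_eq_zero] at h1
      rw [← h1]
      unfold intV
      rw [Finset.mul_sum, ← Finset.sum_sub_distrib]
      exact Finset.sum_congr rfl fun x _ => by ring
    rw [hz] at hd
    exact hd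
  intro t ht
  have hsub : ∀ s ∈ Set.Icc 0 t, s ∈ Set.Ico (0 : ℝ) T :=
    fun s hs => ⟨hs.1, lt_of_le_of_lt hs.2 ht.2⟩
  have := constant_of_has_deriv_right_zero
    (f := fun s => intV μ (fun x => h x * Real.exp (u s x))) (a := 0) (b := t)
    (fun s hs => (key s (hsub s hs)).continuousAt.continuousWithinAt)
    (fun s hs => (key s (hsub s ⟨hs.1, hs.2.le⟩)).hasDerivWithinAt) t ⟨ht.1, le_rfl⟩
  exact this.trans hinit
end

section
/- (Monotonicity along the second flow) Let ρ > 0 and let h : V → ℝ change sign with max_{x∈V} h(x) > 0. If u : V × [0,T) → ℝ solves the second flow ∂_t u = α(t)h − R with ∫_V h e^{u(·,0)} dμ = 1, then for all 0 ≤ t₁ < t₂ < T one has J(u(·,t₂)) ≤ J(u(·,t₁)), where J(u) = (1/2)∫_V |∇u|² dμ + (ρ/|V|)∫_V u dμ. -/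
open Real Finset

variable {V : Type*}

/-- The reduced energy `J(u) = (1/2)∫_V |∇u|² dμ + (ρ/|V|)∫_V u dμ`. -/
noncomputable def Jred [Fintype V] [DecidableEq V] (μ : V → ℝ) (W : V → V → ℝ)
    (ρ : ℝ) (u : V → ℝ) : ℝ :=
  (1 / 2) * intV μ (gradSq μ W u) + (ρ / volV μ) * intV μ u

lemma aux_sum_symm [Fintype V] (W : V → V → ℝ) (hWsym : ∀ x y, W x y = W y x)
    (a v : V → ℝ) :
    ∑ x, ∑ y, W x y * (a x - a y) * (v x - v y) =
      2 * ∑ x, v x * ∑ y, W x y * (a x - a y) := by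
  have h1 : ∑ x, ∑ y, W x y * (a x - a y) * v y =
      - ∑ x, ∑ y, W x y * (a x - a y) * v x := by
    rw [Finset.sum_comm, ← Finset.sum_neg_distrib]
    refine Finset.sum_congr rfl fun x _ => ?_
    rw [← Finset.sum_neg_distrib]
    refine Finset.sum_congr rfl fun y _ => ?_
    rw [hWsym y x]; ring
  have h2 : ∑ x, v x * ∑ y, W x y * (a x - a y) = ∑ x, ∑ y, W x y * (a x - a y) * v x := by
    refine Finset.sum_congr rfl fun x _ => ?_
    rw [Finset.mul_sum]
    exact Finset.sum_congr rfl fun y _ => by ring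
  simp only [mul_sub, Finset.sum_sub_distrib] at h1 h2 ⊢
  linarith

lemma aux_opL [Fintype V] [DecidableEq V] (μ : V → ℝ) (W : V → V → ℝ) (hμ : ∀ x, 0 < μ x)
    (u : V → ℝ) (x : V) : μ x * opL μ W u x = ∑ y, W x y * (u x - u y) := by
  have := (hμ x).ne'
  unfold opL
  rw [← mul_assoc, mul_one_div_cancel this, one_mul]
  refine Finset.sum_subset (Finset.filter_subset _ _) ?_
  intro y _ hy
  have : y = x := by simpa using hy
  simp [this]

lemma aux_Jred [Fintype V] [DecidableEq V] (μ : V → ℝ) (W : V → V → ℝ) (hμ : ∀ x, 0 < μ x)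
    (ρ : ℝ) (u : V → ℝ) : Jred μ W ρ u =
      (1 / 4) * ∑ x, ∑ y, W x y * (u x - u y) * (u x - u y) + (ρ / volV μ) * ∑ x, μ x * u x := by
  unfold Jred intV gradSq gradForm
  congr 1
  rw [Finset.mul_sum, Finset.mul_sum]
  refine Finset.sum_congr rfl fun x _ => ?_
  have h0 := (hμ x).ne'
  have : ∑ y ∈ univ.filter (fun y => y ≠ x), W x y * (u x - u y) * (u x - u y)
      = ∑ y, W x y * (u x - u y) * (u x - u y) := by
    refine Finset.sum_subset (Finset.filter_subset _ _) ?_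
    intro y _ hy
    have : y = x := by simpa using hy
    simp [this]
  rw [this]
  field_simp
  ring

lemma aux_deriv [Fintype V] [DecidableEq V] (μ : V → ℝ) (W : V → V → ℝ) (hμ : ∀ x, 0 < μ x)
    (hWsym : ∀ x y, W x y = W y x) (ρ : ℝ) (u : ℝ → V → ℝ) (v : V → ℝ) (t : ℝ)
    (hu : ∀ x, HasDerivAt (fun s => u s x) (v x) t) :
    HasDerivAt (fun s => Jred μ W ρ (u s))
      (∑ x, μ x * (opL μ W (u t) x + ρ / volV μ) * v x) t := by
  simp only [aux_Jred μ W hμ]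
  have hd : HasDerivAt (fun s => (1 / 4) * ∑ x, ∑ y, W x y * (u s x - u s y) * (u s x - u s y)
      + (ρ / volV μ) * ∑ x, μ x * u s x)
      ((1 / 4) * ∑ x, ∑ y, (W x y * (v x - v y) * (u t x - u t y)
        + W x y * (u t x - u t y) * (v x - v y)) + (ρ / volV μ) * ∑ x, μ x * v x) t := by
    refine HasDerivAt.add (HasDerivAt.const_mul _ ?_) (HasDerivAt.const_mul _ ?_)
    · refine HasDerivAt.fun_sum fun x _ => HasDerivAt.fun_sum fun y _ => ?_
      exact (((hu x).sub (hu y)).const_mul _).mul ((hu x).sub (hu y))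
    · exact HasDerivAt.fun_sum fun x _ => (hu x).const_mul _
  convert hd using 1
  have e1 : ∀ x y, W x y * (v x - v y) * (u t x - u t y)
        + W x y * (u t x - u t y) * (v x - v y) =
        2 * (W x y * (u t x - u t y) * (v x - v y)) := fun x y => by ring
  simp only [e1, ← Finset.mul_sum]
  rw [aux_sum_symm W hWsym]
  simp only [← aux_opL μ W hμ]
  rw [← mul_assoc, ← mul_assoc, show (1 / 4 * 2 * 2 : ℝ) = 1 by norm_num, one_mul,
    Finset.mul_sum, ← Finset.sum_add_distrib]
  exact Finset.sum_congr rfl fun x _ => by ring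

lemma aux_neg [Fintype V] [DecidableEq V] (μ : V → ℝ) (W : V → V → ℝ) (hμ : ∀ x, 0 < μ x)
    (ρ : ℝ) (hρ : 0 < ρ) (h : V → ℝ) (hpos : ∃ x, 0 < h x) (u : V → ℝ) :
    ∑ x, μ x * (opL μ W u x + ρ / volV μ) * (alphaC μ W ρ h u * h x - Rcurv μ W ρ u x) ≤ 0 := by
  have hR : ∀ x, opL μ W u x + ρ / volV μ = ρ * Rcurv μ W ρ u x * Real.exp (u x) := by
    intro x
    unfold Rcurv
    rw [Real.exp_neg]
    have := (Real.exp_pos (u x)).ne'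
    field_simp
  have hB : 0 < intV μ (fun x => (h x) ^ 2 * Real.exp (u x)) := by
    obtain ⟨x, hx⟩ := hpos
    refine Finset.sum_pos' (fun y _ => ?_) ⟨x, Finset.mem_univ _, ?_⟩
    · have := hμ y
      positivity
    · have := hμ x
      positivity
  have hα : alphaC μ W ρ h u * intV μ (fun x => (h x) ^ 2 * Real.exp (u x)) =
      intV μ (fun x => h x * Rcurv μ W ρ u x * Real.exp (u x)) :=
    div_mul_cancel₀ _ hB.ne'
  simp only [hR]
  generalize alphaC μ W ρ h u = α at *
  unfold intV at hα
  rw [Finset.mul_sum] at hα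
  have key : ∑ x, μ x * (ρ * Rcurv μ W ρ u x * Real.exp (u x)) * (α * h x - Rcurv μ W ρ u x)
      = - ρ * ∑ x, μ x * Real.exp (u x) * (α * h x - Rcurv μ W ρ u x) ^ 2
        + ρ * α * (∑ x, α * (μ x * ((h x) ^ 2 * Real.exp (u x)))
          - ∑ x, μ x * (h x * Rcurv μ W ρ u x * Real.exp (u x))) := by
    rw [← Finset.sum_sub_distrib, Finset.mul_sum, Finset.mul_sum, ← Finset.sum_add_distrib]
    exact Finset.sum_congr rfl fun x _ => by ring
  rw [key, hα, sub_self, mul_zero, add_zero]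
  have : 0 ≤ ∑ x, μ x * Real.exp (u x) * (α * h x - Rcurv μ W ρ u x) ^ 2 :=
    Finset.sum_nonneg fun x _ => by
      have := hμ x
      positivity
  have := mul_nonneg hρ.le this
  linarith

/-- (Monotonicity along the second flow) `J(u(·,t))` is non-increasing along the second flow. -/
theorem second_flow_monotone [Fintype V] [Nonempty V] [DecidableEq V]
    (μ : V → ℝ) (W : V → V → ℝ)
    (hμ : ∀ x, 0 < μ x)
    (hWsym : ∀ x y, W x y = W y x)
    (hWpos : ∀ x y, x ≠ y → 0 < W x y)
    (ρ : ℝ) (hρ : 0 < ρ)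
    (h : V → ℝ) (hpos : ∃ x, 0 < h x) (hneg : ∃ x, h x < 0)
    (T : ℝ) (u : ℝ → V → ℝ)
    (hinit : intV μ (fun x => h x * Real.exp (u 0 x)) = 1)
    (hflow : ∀ x, ∀ t ∈ Set.Ico (0 : ℝ) T,
      HasDerivAt (fun s => u s x)
        (alphaC μ W ρ h (u t) * h x - Rcurv μ W ρ (u t) x) t) :
    ∀ t₁ t₂ : ℝ, 0 ≤ t₁ → t₁ < t₂ → t₂ < T →
      Jred μ W ρ (u t₂) ≤ Jred μ W ρ (u t₁) := by
  intro t₁ t₂ h0 h12 hT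
  have hd : ∀ t ∈ Set.Icc t₁ t₂, HasDerivAt (fun s => Jred μ W ρ (u s)) _ t := fun t ht =>
    aux_deriv μ W hμ hWsym ρ u _ t
      (fun x => hflow x t ⟨h0.trans ht.1, ht.2.trans_lt hT⟩)
  have hanti : AntitoneOn (fun s => Jred μ W ρ (u s)) (Set.Icc t₁ t₂) := by
    refine antitoneOn_of_deriv_nonpos (convex_Icc _ _)
      (fun t ht => (hd t ht).continuousAt.continuousWithinAt)
      (fun t ht => (hd t (interior_subset ht)).differentiableAt.differentiableWithinAt) ?_
    intro t ht
    rw [(hd t (interior_subset ht)).deriv]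
    exact aux_neg μ W hμ ρ hρ h hpos (u t)
  exact hanti (Set.left_mem_Icc.2 h12.le) (Set.right_mem_Icc.2 h12.le) h12.le
end

section
/- (Global existence and subsequential convergence of the second flow) Let ρ > 0 and let h : V → ℝ change sign with max_{x∈V} h(x) > 0. For any initial function u₀ : V → ℝ with ∫_V h e^{u₀} dμ = 1: (i) there exists a unique function u : V × [0, +∞) → ℝ, differentiable in t, solving ∂_t u = α(t)h − R with u(·,0) = u₀; (ii) there exist an increasing sequence t_n → +∞ and a function u_∞ : V → ℝ with ∫_V h e^{u_∞} dμ = 1 such that u(x, t_n) → u_∞(x) uniformly in x ∈ V as n → +∞, and u_∞ solves Lu_∞(x) = ρ h(x) e^{u_∞(x)} − ρ/|V| for every x ∈ V, i.e. u_∞ solves the fractional mean field equation. -/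
open Real Finset

variable {V : Type*}

theorem ode_global_of_lip {E : Type*} [NormedAddCommGroup E] [NormedSpace ℝ E] [CompleteSpace E]
    (G : E → E) (K L : NNReal) (hK : LipschitzWith K G) (hL : ∀ x, ‖G x‖ ≤ L) (x₀ : E) :
    ∃ u : ℝ → E, u 0 = x₀ ∧ ∀ t, HasDerivAt u (G (u t)) t := by
  have key : ∀ T : ℝ, ∃ u : ℝ → E, u 0 = x₀ ∧ ∀ t ∈ Set.Ioo (-T) T, HasDerivAt u (G (u t)) t := by
    intro T
    rcases le_or_gt T 0 with hT | hT
    · exact ⟨fun _ => x₀, rfl, fun t ht => by have := ht.1; have := ht.2; linarith⟩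
    have hpl : IsPicardLindelof (fun _ : ℝ => G) (tmin := -T) (tmax := T)
        ⟨0, by constructor <;> linarith⟩ x₀ (L * T.toNNReal) 0 L K := by
      refine ⟨fun t _ => hK.lipschitzOnWith, fun x _ => continuousOn_const,
        fun t _ x _ => hL x, ?_⟩
      simp [hT.le]
    obtain ⟨u, h0, hu⟩ := hpl.exists_eq_forall_mem_Icc_hasDerivWithinAt₀
    exact ⟨u, h0, fun t ht => (hu t (Set.Ioo_subset_Icc_self ht)).hasDerivAt
      (Icc_mem_nhds ht.1 ht.2)⟩
  choose γ h0 hγ using key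
  have huniq : ∀ a b, 0 < a → a ≤ b → Set.EqOn (γ a) (γ b) (Set.Ioo (-a) a) := by
    intro a b ha hab
    refine ODE_solution_unique_of_mem_Ioo (v := fun _ => G) (s := fun _ => Set.univ) (K := K)
      (t₀ := 0)
      (fun t _ => hK.lipschitzOnWith) ⟨by linarith, ha⟩ (fun t ht => ⟨hγ a t ht, trivial⟩)
      (fun t ht => ⟨hγ b t ⟨by linarith [ht.1], by linarith [ht.2]⟩, trivial⟩)
      (by rw [h0, h0])
  refine ⟨fun t => γ (|t| + 1) t, h0 _, fun t => ?_⟩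
  have ht : t ∈ Set.Ioo (-(|t| + 1)) (|t| + 1) := abs_lt.mp (by linarith)
  refine (hγ (|t| + 1) t ht).congr_of_eventuallyEq ?_
  filter_upwards [Ioo_mem_nhds ht.1 ht.2] with s hs
  have hs' : s ∈ Set.Ioo (-(|s| + 1)) (|s| + 1) := abs_lt.mp (by linarith)
  rcases le_total (|s| + 1) (|t| + 1) with hh | hh
  · exact huniq _ _ (by positivity) hh hs'
  · exact (huniq _ _ (by positivity) hh hs).symm

theorem clamp_lip {V : Type*} [Fintype V] (M : ℝ) :
    LipschitzWith 1 (fun (u : V → ℝ) (x : V) => max (-M) (min M (u x))) := by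
  refine LipschitzWith.of_dist_le_mul fun u v => ?_
  rw [NNReal.coe_one, one_mul, dist_pi_le_iff dist_nonneg]
  intro x
  refine le_trans ?_ (dist_le_pi_dist u v x)
  simp only [Real.dist_eq]
  rw [max_def, max_def, min_def, min_def]
  rcases abs_cases (u x - v x) with h | h <;> split_ifs <;> rw [abs_le] <;> constructor <;> linarith

theorem lip_ball {V : Type*} [Fintype V] (F : (V → ℝ) → (V → ℝ)) (hF : ContDiff ℝ 1 F) (M : ℝ) :
    ∃ K, LipschitzOnWith K F (Metric.closedBall 0 M) :=
  hF.contDiffOn.exists_lipschitzOnWith one_ne_zero (convex_closedBall 0 M)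
    (isCompact_closedBall 0 M)

theorem ode_confined {V : Type*} [Fintype V] (F : (V → ℝ) → (V → ℝ)) (hF : ContDiff ℝ 1 F)
    (x₀ : V → ℝ) (M : ℝ)
    (hap : ∀ u : ℝ → V → ℝ, u 0 = x₀ → ∀ T, 0 ≤ T →
      (∀ t ∈ Set.Icc 0 T, HasDerivAt u (F (u t)) t) → ‖u T‖ < M) (hx₀ : ‖x₀‖ < M) :
    ∃ u : ℝ → V → ℝ, u 0 = x₀ ∧ ∀ t, 0 ≤ t → (HasDerivAt u (F (u t)) t ∧ ‖u t‖ < M) := by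
  have hM : 0 < M := lt_of_le_of_lt (norm_nonneg _) hx₀
  obtain ⟨K, hK⟩ := lip_ball F hF M
  set c : (V → ℝ) → (V → ℝ) := fun u x => max (-M) (min M (u x)) with hc
  have hcl : ∀ u, c u ∈ Metric.closedBall 0 M := by
    intro u
    rw [mem_closedBall_zero_iff, pi_norm_le_iff_of_nonneg hM.le]
    intro x
    rw [Real.norm_eq_abs, abs_le]
    exact ⟨le_max_left _ _, max_le (by linarith) (min_le_left _ _)⟩
  have hcid : ∀ u, ‖u‖ ≤ M → c u = u := by
    intro u hu
    funext x
    have := (norm_le_pi_norm u x).trans hu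
    rw [Real.norm_eq_abs, abs_le] at this
    simp only [hc]
    rw [min_eq_right this.2, max_eq_right this.1]
  obtain ⟨L, hL⟩ := (isCompact_closedBall (0 : V → ℝ) M).exists_bound_of_continuousOn
    hF.continuous.continuousOn
  have hGl : LipschitzWith K (F ∘ c) := by
    have := hK.comp (clamp_lip (V := V) M).lipschitzOnWith (s := Set.univ) (fun u _ => hcl u)
    rw [mul_one] at this
    exact lipschitzOnWith_univ.mp this
  obtain ⟨u, hu0, hu⟩ := ode_global_of_lip (F ∘ c) K L.toNNReal hGl
    (fun x => (hL _ (hcl x)).trans (Real.le_coe_toNNReal L)) x₀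
  have hcont : Continuous u := continuous_iff_continuousAt.mpr fun t => (hu t).continuousAt
  have hb : ∀ t, 0 ≤ t → ‖u t‖ < M := by
    by_contra! hcon
    obtain ⟨t₁, ht₁, hMt⟩ := hcon
    set S := {t : ℝ | 0 ≤ t ∧ M ≤ ‖u t‖} with hS
    have hSc : IsClosed S :=
      (isClosed_le continuous_const continuous_id).inter (isClosed_le continuous_const hcont.norm)
    have hSb : BddBelow S := ⟨0, fun t ht => ht.1⟩
    have hmem : sInf S ∈ S := hSc.csInf_mem ⟨t₁, ht₁, hMt⟩ hSb
    have hlt : ∀ t, 0 ≤ t → t < sInf S → ‖u t‖ < M := by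
      intro t h0 h1
      by_contra! h2
      exact absurd (csInf_le hSb ⟨h0, h2⟩) (not_le.mpr h1)
    have hpos : 0 < sInf S := by
      rcases hmem.1.lt_or_eq with h | h
      · exact h
      · have := hmem.2
        rw [← h, hu0] at this
        linarith
    have hle : ‖u (sInf S)‖ ≤ M := by
      have h1 : Filter.Tendsto (fun t => ‖u t‖) (nhdsWithin (sInf S) (Set.Iio (sInf S)))
          (nhds ‖u (sInf S)‖) := (hcont.norm.tendsto _).mono_left nhdsWithin_le_nhds
      refine le_of_tendsto h1 ?_
      filter_upwards [Ioo_mem_nhdsLT hpos] with t ht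
      exact (hlt t ht.1.le ht.2).le
    have := hap u hu0 (sInf S) hmem.1 (fun t ht => by
      have h3 : ‖u t‖ ≤ M := by
        rcases ht.2.lt_or_eq with h | h
        · exact (hlt t ht.1 h).le
        · rw [h]; exact hle
      have h4 := hu t
      simp only [Function.comp, hcid _ h3] at h4
      exact h4)
    exact absurd hmem.2 (not_le.mpr this)
  refine ⟨u, hu0, fun t ht => ⟨?_, hb t ht⟩⟩
  have h4 := hu t
  simp only [Function.comp, hcid _ (hb t ht).le] at h4
  exact h4

theorem ode_unique {V : Type*} [Fintype V] (F : (V → ℝ) → (V → ℝ)) (hF : ContDiff ℝ 1 F)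
    (u v : ℝ → V → ℝ) (h0 : v 0 = u 0)
    (hu : ∀ t, 0 ≤ t → HasDerivAt u (F (u t)) t) (hv : ∀ t, 0 ≤ t → HasDerivAt v (F (v t)) t)
    (T : ℝ) (hT : 0 ≤ T) : v T = u T := by
  have cu : ContinuousOn u (Set.Icc 0 T) := fun t ht => (hu t ht.1).continuousAt.continuousWithinAt
  have cv : ContinuousOn v (Set.Icc 0 T) := fun t ht => (hv t ht.1).continuousAt.continuousWithinAt
  obtain ⟨A, hA⟩ := isCompact_Icc.exists_bound_of_continuousOn cu
  obtain ⟨B, hB⟩ := isCompact_Icc.exists_bound_of_continuousOn cv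
  obtain ⟨K, hK⟩ := lip_ball F hF (max A B)
  refine ODE_solution_unique_of_mem_Icc_right (v := fun _ => F)
    (s := fun _ => Metric.closedBall 0 (max A B)) (K := K) (a := 0) (b := T)
    (fun t _ => hK) cv (fun t ht => (hv t ht.1).hasDerivWithinAt) ?_ cu
    (fun t ht => (hu t ht.1).hasDerivWithinAt) ?_ h0 ⟨hT, le_rfl⟩
  · intro t ht
    rw [mem_closedBall_zero_iff]
    exact (hB t ⟨ht.1, ht.2.le⟩).trans (le_max_right _ _)
  · intro t ht
    rw [mem_closedBall_zero_iff]
    exact (hA t ⟨ht.1, ht.2.le⟩).trans (le_max_left _ _)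

noncomputable def flowF [Fintype V] [DecidableEq V] (μ : V → ℝ) (W : V → V → ℝ)
    (ρ : ℝ) (h : V → ℝ) (u : V → ℝ) (x : V) : ℝ :=
  alphaC μ W ρ h u * h x - Rcurv μ W ρ u x

noncomputable def energyJ [Fintype V] (μ : V → ℝ) (W : V → V → ℝ)
    (ρ : ℝ) (u : V → ℝ) : ℝ :=
  (1 / 4) * ∑ x, ∑ y, W x y * (u x - u y) ^ 2 + (ρ / volV μ) * ∑ x, μ x * u x

theorem denom_pos [Fintype V] (μ h u : V → ℝ) (hμ : ∀ x, 0 < μ x) (hpos : ∃ x, 0 < h x) :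
    0 < intV μ (fun x => (h x) ^ 2 * Real.exp (u x)) := by
  obtain ⟨p, hp⟩ := hpos
  unfold intV
  refine Finset.sum_pos' (fun x _ => ?_) ⟨p, Finset.mem_univ p, ?_⟩
  · have := hμ x; positivity
  · have := hμ p; positivity

theorem volV_pos [Fintype V] [Nonempty V] (μ : V → ℝ) (hμ : ∀ x, 0 < μ x) : 0 < volV μ :=
  Finset.sum_pos (fun x _ => hμ x) Finset.univ_nonempty

theorem contDiff_Rcurv [Fintype V] [DecidableEq V] (μ : V → ℝ) (W : V → V → ℝ) (ρ : ℝ) (x : V) :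
    ContDiff ℝ 1 (fun u : V → ℝ => Rcurv μ W ρ u x) := by
  unfold Rcurv opL
  fun_prop

theorem contDiff_alphaC [Fintype V] [DecidableEq V] (μ : V → ℝ) (W : V → V → ℝ) (ρ : ℝ)
    (h : V → ℝ) (hμ : ∀ x, 0 < μ x) (hpos : ∃ x, 0 < h x) :
    ContDiff ℝ 1 (fun u : V → ℝ => alphaC μ W ρ h u) := by
  unfold alphaC
  refine ContDiff.div ?_ ?_ (fun u => (denom_pos μ h u hμ hpos).ne')
  · unfold intV
    have := contDiff_Rcurv μ W ρ
    fun_prop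
  · unfold intV
    fun_prop

theorem contDiff_flowF [Fintype V] [DecidableEq V] (μ : V → ℝ) (W : V → V → ℝ) (ρ : ℝ)
    (h : V → ℝ) (hμ : ∀ x, 0 < μ x) (hpos : ∃ x, 0 < h x) :
    ContDiff ℝ 1 (flowF μ W ρ h) := by
  rw [contDiff_pi]
  intro x
  unfold flowF
  have h1 := contDiff_alphaC μ W ρ h hμ hpos
  have h2 := contDiff_Rcurv μ W ρ x
  fun_prop

theorem flow_orth [Fintype V] [DecidableEq V] (μ : V → ℝ) (W : V → V → ℝ) (ρ : ℝ)
    (h : V → ℝ) (hμ : ∀ x, 0 < μ x) (hpos : ∃ x, 0 < h x) (u : V → ℝ) :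
    ∑ x, μ x * (h x * (Real.exp (u x) * flowF μ W ρ h u x)) = 0 := by
  have hd := denom_pos μ h u hμ hpos
  have key : alphaC μ W ρ h u * intV μ (fun x => (h x) ^ 2 * Real.exp (u x))
      = intV μ (fun x => h x * Rcurv μ W ρ u x * Real.exp (u x)) := by
    unfold alphaC
    field_simp
  unfold intV at key
  rw [Finset.mul_sum, ← sub_eq_zero, ← Finset.sum_sub_distrib] at key
  rw [← key]
  refine Finset.sum_congr rfl fun x _ => ?_
  unfold flowF
  ring

theorem flow_dissip [Fintype V] [DecidableEq V] (μ : V → ℝ) (W : V → V → ℝ) (ρ : ℝ) (hρ : 0 < ρ)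
    (h : V → ℝ) (hμ : ∀ x, 0 < μ x) (hpos : ∃ x, 0 < h x) (u : V → ℝ) :
    ∑ x, μ x * ((opL μ W u x + ρ / volV μ) * flowF μ W ρ h u x)
      = -ρ * ∑ x, μ x * (Real.exp (u x) * flowF μ W ρ h u x ^ 2) := by
  have h1 := flow_orth μ W ρ h hμ hpos u
  have h2 : ∀ x, opL μ W u x + ρ / volV μ
      = ρ * Real.exp (u x) * (alphaC μ W ρ h u * h x - flowF μ W ρ h u x) := by
    intro x
    have h3 : Real.exp (u x) * Real.exp (-(u x)) = 1 := by rw [← Real.exp_add]; simp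
    have h4 : ρ * (1 / ρ) = 1 := by field_simp
    unfold flowF Rcurv
    linear_combination (-(opL μ W u x + ρ / volV μ)) * ((ρ * (1 / ρ)) * h3 + h4)
  calc _ = ∑ x, (ρ * alphaC μ W ρ h u * (μ x * (h x * (Real.exp (u x) * flowF μ W ρ h u x)))
          + -ρ * (μ x * (Real.exp (u x) * flowF μ W ρ h u x ^ 2))) := by
        refine Finset.sum_congr rfl fun x _ => ?_
        rw [h2]; ring
    _ = _ := by
        rw [Finset.sum_add_distrib, ← Finset.mul_sum, ← Finset.mul_sum, h1]; ring

theorem energy_hasDerivAt [Fintype V] [DecidableEq V] (μ : V → ℝ) (W : V → V → ℝ)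
    (hμ : ∀ x, 0 < μ x) (hWsym : ∀ x y, W x y = W y x) (ρ : ℝ)
    (u : ℝ → V → ℝ) (w : V → ℝ) (t : ℝ) (hu : HasDerivAt u w t) :
    HasDerivAt (fun s => energyJ μ W ρ (u s))
      (∑ x, μ x * ((opL μ W (u t) x + ρ / volV μ) * w x)) t := by
  rw [hasDerivAt_pi] at hu
  have h1 : HasDerivAt (fun s => energyJ μ W ρ (u s))
      ((1 / 4) * ∑ x, ∑ y, W x y * (2 * (u t x - u t y) * (w x - w y))
        + (ρ / volV μ) * ∑ x, μ x * w x) t := by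
    unfold energyJ
    refine HasDerivAt.add (HasDerivAt.const_mul _ (HasDerivAt.fun_sum fun x _ =>
      HasDerivAt.fun_sum fun y _ => HasDerivAt.const_mul _ ?_))
      (HasDerivAt.const_mul _ (HasDerivAt.fun_sum fun x _ => HasDerivAt.const_mul _ (hu x)))
    convert ((hu x).fun_sub (hu y)).fun_pow 2 using 1
    simp
  convert h1 using 1
  have h2 : ∑ x, ∑ y, W x y * ((u t x - u t y) * w y)
      = - ∑ x, ∑ y, W x y * ((u t x - u t y) * w x) := by
    rw [Finset.sum_comm, ← Finset.sum_neg_distrib]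
    refine Finset.sum_congr rfl fun x _ => ?_
    rw [← Finset.sum_neg_distrib]
    refine Finset.sum_congr rfl fun y _ => ?_
    rw [hWsym]; ring
  have h3 : ∑ x, ∑ y, W x y * (2 * (u t x - u t y) * (w x - w y))
      = 4 * ∑ x, ∑ y, W x y * ((u t x - u t y) * w x) := by
    have : ∑ x, ∑ y, W x y * (2 * (u t x - u t y) * (w x - w y))
      = 2 * (∑ x, ∑ y, W x y * ((u t x - u t y) * w x)) -
        2 * ∑ x, ∑ y, W x y * ((u t x - u t y) * w y) := by
      simp only [Finset.mul_sum, ← Finset.sum_sub_distrib]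
      refine Finset.sum_congr rfl fun x _ => Finset.sum_congr rfl fun y _ => ?_
      ring
    rw [this, h2]; ring
  rw [h3]
  have h4 : ∀ x, μ x * ((opL μ W (u t) x + ρ / volV μ) * w x)
      = ∑ y, W x y * ((u t x - u t y) * w x) + (ρ / volV μ) * (μ x * w x) := by
    intro x
    have h5 : ∑ y, W x y * ((u t x - u t y) * w x) = (∑ y, W x y * (u t x - u t y)) * w x := by
      rw [Finset.sum_mul]
      refine Finset.sum_congr rfl fun y _ => ?_
      ring
    rw [opL_eq, h5]
    have := (hμ x).ne'
    field_simp
  rw [Finset.sum_congr rfl fun x _ => h4 x, Finset.sum_add_distrib, ← Finset.mul_sum]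
  ring

theorem exists_w [Fintype V] (W : V → V → ℝ) (hWpos : ∀ x y, x ≠ y → 0 < W x y) :
    ∃ c > 0, ∀ x y, x ≠ y → c ≤ W x y := by
  classical
  set S := (Finset.univ : Finset (V × V)).filter (fun p => p.1 ≠ p.2) with hS
  rcases S.eq_empty_or_nonempty with h | h
  · refine ⟨1, one_pos, fun x y hxy => ?_⟩
    have : (x, y) ∈ S := by simp [hS, hxy]
    simp [h] at this
  · obtain ⟨p, hp, hmin⟩ := S.exists_min_image (fun p => W p.1 p.2) h
    refine ⟨W p.1 p.2, hWpos _ _ (by simpa [hS] using hp), fun x y hxy => ?_⟩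
    exact hmin (x, y) (by simp [hS, hxy])

theorem coercive [Fintype V] [Nonempty V] (μ : V → ℝ) (W : V → V → ℝ)
    (hμ : ∀ x, 0 < μ x) (hWpos : ∀ x y, x ≠ y → 0 < W x y)
    (ρ : ℝ) (hρ : 0 < ρ) (h : V → ℝ) (A : ℝ) :
    ∃ C, ∀ u : V → ℝ, intV μ (fun x => h x * Real.exp (u x)) = 1 → energyJ μ W ρ u ≤ A →
      ‖u‖ ≤ C := by
  obtain ⟨c, hc, hcW⟩ := exists_w W hWpos
  have hvol := volV_pos μ hμ
  set B := Real.log (∑ x, μ x * |h x|) with hB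
  set K := (8 / c) * (|A| + ρ * |B| + 2 * ρ ^ 2 / c) with hK
  refine ⟨|A| / ρ + |B| + 1 + K + K, fun u hu hJ => ?_⟩
  obtain ⟨p, hp⟩ := Finite.exists_max u
  obtain ⟨q, hq⟩ := Finite.exists_min u
  set D := u p - u q with hD
  have hD0 : 0 ≤ D := by linarith [hq p]
  -- lower bound for max
  have hM : -B ≤ u p := by
    have h1 : (1 : ℝ) ≤ (∑ x, μ x * |h x|) * Real.exp (u p) := by
      rw [← hu, Finset.sum_mul]
      unfold intV
      refine Finset.sum_le_sum fun x _ => ?_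
      rw [mul_assoc]
      refine mul_le_mul_of_nonneg_left ?_ (hμ x).le
      exact mul_le_mul (le_abs_self _) (Real.exp_le_exp.mpr (hp x)) (Real.exp_pos _).le
        (abs_nonneg _)
    have hpos : 0 < ∑ x, μ x * |h x| := by
      by_contra! hcon
      have := mul_nonpos_of_nonpos_of_nonneg hcon (Real.exp_pos (u p)).le
      linarith
    have h2 := Real.log_nonneg h1
    rw [Real.log_mul hpos.ne' (Real.exp_pos _).ne', Real.log_exp] at h2
    linarith
  -- energy lower bound
  have hW0 : ∀ x y, 0 ≤ W x y * (u x - u y) ^ 2 := by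
    intro x y
    by_cases hxy : x = y
    · simp [hxy]
    · exact mul_nonneg (hWpos x y hxy).le (sq_nonneg _)
  have hE : c * D ^ 2 ≤ ∑ x, ∑ y, W x y * (u x - u y) ^ 2 := by
    have h1 : W p q * (u p - u q) ^ 2 ≤ ∑ y, W p y * (u p - u y) ^ 2 :=
      Finset.single_le_sum (f := fun y => W p y * (u p - u y) ^ 2) (fun y _ => hW0 p y)
        (Finset.mem_univ q)
    have h2 : ∑ y, W p y * (u p - u y) ^ 2 ≤ ∑ x, ∑ y, W x y * (u x - u y) ^ 2 :=
      Finset.single_le_sum (f := fun x => ∑ y, W x y * (u x - u y) ^ 2)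
        (fun x _ => Finset.sum_nonneg fun y _ => hW0 x y) (Finset.mem_univ p)
    refine le_trans ?_ (h1.trans h2)
    by_cases hpq : p = q
    · simp [hD, hpq]
    · exact mul_le_mul_of_nonneg_right (hcW p q hpq) (sq_nonneg _)
  have hA : ρ * u q ≤ (ρ / volV μ) * ∑ x, μ x * u x := by
    have h1 : volV μ * u q ≤ ∑ x, μ x * u x := by
      unfold volV
      rw [Finset.sum_mul]
      exact Finset.sum_le_sum fun x _ => mul_le_mul_of_nonneg_left (hq x) (hμ x).le
    calc ρ * u q = (ρ / volV μ) * (volV μ * u q) := by field_simp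
      _ ≤ _ := mul_le_mul_of_nonneg_left h1 (by positivity)
  have hJ2 : c / 4 * D ^ 2 + ρ * (u p - D) ≤ A := by
    have : u p - D = u q := by rw [hD]; ring
    rw [this]
    unfold energyJ at hJ
    linarith
  have hDK : D ^ 2 ≤ K := by
    have h1 : ρ * D ≤ c / 8 * D ^ 2 + 2 * ρ ^ 2 / c := by
      have : c / 8 * D ^ 2 + 2 * ρ ^ 2 / c - ρ * D = (c * D - 4 * ρ) ^ 2 / (8 * c) := by
        field_simp; ring
      have h2 : 0 ≤ (c * D - 4 * ρ) ^ 2 / (8 * c) := by positivity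
      linarith
    have h3 : ρ * -|B| ≤ ρ * u p :=
      mul_le_mul_of_nonneg_left (by linarith [le_abs_self B]) hρ.le
    have h4 : c / 8 * D ^ 2 ≤ |A| + ρ * |B| + 2 * ρ ^ 2 / c := by
      have := le_abs_self A
      nlinarith
    calc D ^ 2 = (8 / c) * (c / 8 * D ^ 2) := by field_simp
      _ ≤ K := mul_le_mul_of_nonneg_left h4 (by positivity)
  have hDK' : D ≤ 1 + K := by nlinarith [sq_nonneg (D - 1)]
  have hK0 : 0 ≤ K := le_trans (sq_nonneg D) hDK
  have hup : u p ≤ |A| / ρ + D := by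
    have h1 : ρ * (u p - D) ≤ |A| := by
      have : 0 ≤ c / 4 * D ^ 2 := by positivity
      linarith [le_abs_self A]
    have h2 : u p - D ≤ |A| / ρ := by
      rw [le_div_iff₀ hρ]; linarith
    linarith
  have hA0 : 0 ≤ |A| / ρ := by positivity
  rw [pi_norm_le_iff_of_nonneg (by positivity)]
  intro x
  rw [Real.norm_eq_abs, abs_le]
  have := hp x
  have := hq x
  have := le_abs_self B
  have := abs_nonneg B
  constructor <;> linarith

theorem constraint_hasDerivAt [Fintype V] (μ h : V → ℝ)
    (u : ℝ → V → ℝ) (w : V → ℝ) (t : ℝ) (hu : HasDerivAt u w t) :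
    HasDerivAt (fun s => intV μ (fun x => h x * Real.exp (u s x)))
      (∑ x, μ x * (h x * (Real.exp (u t x) * w x))) t := by
  rw [hasDerivAt_pi] at hu
  unfold intV
  exact HasDerivAt.fun_sum fun x _ => ((hu x).exp.const_mul _).const_mul _

theorem constraint_const [Fintype V] [DecidableEq V] (μ : V → ℝ) (W : V → V → ℝ) (ρ : ℝ)
    (h : V → ℝ) (hμ : ∀ x, 0 < μ x) (hpos : ∃ x, 0 < h x) (u : ℝ → V → ℝ) (T : ℝ) (hT : 0 ≤ T)
    (hu : ∀ t ∈ Set.Icc 0 T, HasDerivAt u (flowF μ W ρ h (u t)) t) :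
    intV μ (fun x => h x * Real.exp (u T x)) = intV μ (fun x => h x * Real.exp (u 0 x)) := by
  have hd : ∀ t ∈ Set.Icc 0 T,
      HasDerivAt (fun s => intV μ (fun x => h x * Real.exp (u s x))) 0 t := by
    intro t ht
    have := constraint_hasDerivAt μ h u _ t (hu t ht)
    rwa [flow_orth μ W ρ h hμ hpos] at this
  exact constant_of_has_deriv_right_zero (f := fun s => intV μ (fun x => h x * Real.exp (u s x)))
    (fun t ht => (hd t ht).continuousAt.continuousWithinAt)
    (fun t ht => (hd t ⟨ht.1, ht.2.le⟩).hasDerivWithinAt) T ⟨hT, le_rfl⟩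

/-- The dissipation. -/
noncomputable def dissD [Fintype V] [DecidableEq V] (μ : V → ℝ) (W : V → V → ℝ)
    (ρ : ℝ) (h : V → ℝ) (u : V → ℝ) : ℝ :=
  ∑ x, μ x * (Real.exp (u x) * flowF μ W ρ h u x ^ 2)

theorem dissD_nonneg [Fintype V] [DecidableEq V] (μ : V → ℝ) (W : V → V → ℝ)
    (ρ : ℝ) (h : V → ℝ) (hμ : ∀ x, 0 < μ x) (u : V → ℝ) : 0 ≤ dissD μ W ρ h u :=
  Finset.sum_nonneg fun x _ => by have := hμ x; positivity

theorem energy_flow [Fintype V] [DecidableEq V] (μ : V → ℝ) (W : V → V → ℝ)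
    (hμ : ∀ x, 0 < μ x) (hWsym : ∀ x y, W x y = W y x) (ρ : ℝ) (hρ : 0 < ρ)
    (h : V → ℝ) (hpos : ∃ x, 0 < h x)
    (u : ℝ → V → ℝ) (t : ℝ) (hu : HasDerivAt u (flowF μ W ρ h (u t)) t) :
    HasDerivAt (fun s => energyJ μ W ρ (u s)) (-ρ * dissD μ W ρ h (u t)) t := by
  have := energy_hasDerivAt μ W hμ hWsym ρ u _ t hu
  rwa [flow_dissip μ W ρ hρ h hμ hpos] at this

theorem energy_mono [Fintype V] [DecidableEq V] (μ : V → ℝ) (W : V → V → ℝ)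
    (hμ : ∀ x, 0 < μ x) (hWsym : ∀ x y, W x y = W y x) (ρ : ℝ) (hρ : 0 < ρ)
    (h : V → ℝ) (hpos : ∃ x, 0 < h x)
    (u : ℝ → V → ℝ) (a b : ℝ) (hab : a ≤ b)
    (hu : ∀ t ∈ Set.Icc a b, HasDerivAt u (flowF μ W ρ h (u t)) t) :
    energyJ μ W ρ (u b) ≤ energyJ μ W ρ (u a) := by
  have hd := fun t ht => energy_flow μ W hμ hWsym ρ hρ h hpos u t (hu t ht)
  have : AntitoneOn (fun s => energyJ μ W ρ (u s)) (Set.Icc a b) := by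
    refine antitoneOn_of_hasDerivWithinAt_nonpos (convex_Icc a b)
      (f' := fun t => -ρ * dissD μ W ρ h (u t))
      (fun t ht => (hd t ht).continuousAt.continuousWithinAt)
      (fun t ht => (hd t (interior_subset ht)).hasDerivWithinAt) (fun t _ => ?_)
    have := mul_nonneg hρ.le (dissD_nonneg μ W ρ h hμ (u t))
    linarith
  exact this ⟨le_rfl, hab⟩ ⟨hab, le_rfl⟩ hab

theorem stationary [Fintype V] [Nonempty V] [DecidableEq V] (μ : V → ℝ) (W : V → V → ℝ)
    (hμ : ∀ x, 0 < μ x) (hWsym : ∀ x y, W x y = W y x) (ρ : ℝ) (hρ : 0 < ρ)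
    (h : V → ℝ) (u : V → ℝ) (hu : intV μ (fun x => h x * Real.exp (u x)) = 1)
    (hD : dissD μ W ρ h u = 0) (x : V) :
    opL μ W u x = ρ * h x * Real.exp (u x) - ρ / volV μ := by
  have hvol := volV_pos μ hμ
  have hF : ∀ x, flowF μ W ρ h u x = 0 := by
    intro x
    have h1 := (Finset.sum_eq_zero_iff_of_nonneg (fun x _ => by
      have := hμ x; positivity)).mp hD x (Finset.mem_univ x)
    have h2 := (hμ x).ne'
    have h3 := (Real.exp_pos (u x)).ne'
    simpa [h2, h3] using h1
  set α := alphaC μ W ρ h u with hα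
  have h2 : ∀ x, opL μ W u x + ρ / volV μ = ρ * Real.exp (u x) * (α * h x) := by
    intro x
    have h3 : Real.exp (u x) * Real.exp (-(u x)) = 1 := by rw [← Real.exp_add]; simp
    have h4 : ρ * (1 / ρ) = 1 := by field_simp
    have h5 := hF x
    unfold flowF Rcurv at h5
    linear_combination (-(opL μ W u x + ρ / volV μ)) * ((ρ * (1 / ρ)) * h3 + h4)
      - ρ * Real.exp (u x) * h5
  have hL : ∑ x, μ x * opL μ W u x = 0 := by
    have h5 : ∀ x, μ x * opL μ W u x = ∑ y, W x y * (u x - u y) := by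
      intro x
      rw [opL_eq]
      have := (hμ x).ne'
      field_simp
    rw [Finset.sum_congr rfl fun x _ => h5 x]
    have h6 : ∑ x, ∑ y, W x y * (u x - u y) = - ∑ x, ∑ y, W x y * (u x - u y) := by
      conv_lhs => rw [Finset.sum_comm]
      rw [← Finset.sum_neg_distrib]
      refine Finset.sum_congr rfl fun x _ => ?_
      rw [← Finset.sum_neg_distrib]
      refine Finset.sum_congr rfl fun y _ => ?_
      rw [hWsym]; ring
    linarith
  have h7 : ∑ x, μ x * (opL μ W u x + ρ / volV μ) = ρ := by
    simp only [mul_add, Finset.sum_add_distrib, hL, ← Finset.sum_mul]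
    change 0 + volV μ * (ρ / volV μ) = ρ
    field_simp
    ring
  have h8 : ∑ x, μ x * (opL μ W u x + ρ / volV μ) = ρ * α := by
    have : ∑ x, μ x * (opL μ W u x + ρ / volV μ)
        = ρ * α * ∑ x, μ x * (h x * Real.exp (u x)) := by
      rw [Finset.mul_sum]
      refine Finset.sum_congr rfl fun x _ => ?_
      rw [h2]; ring
    rw [this]
    unfold intV at hu
    rw [hu, mul_one]
  have h9 : α = 1 := by
    have : ρ * α = ρ * 1 := by linarith
    exact mul_left_cancel₀ hρ.ne' this
  have := h2 x
  rw [h9] at this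
  linarith

/-- (Global existence and subsequential convergence of the second flow) The second flow with
initial datum in `{∫_V h e^u dμ = 1}` has a unique global solution, and along a sequence of
times tending to infinity it converges uniformly to a solution `u_∞` of the fractional mean
field equation with `∫_V h e^{u_∞} dμ = 1`. -/
theorem second_flow_global_convergence [Fintype V] [Nonempty V] [DecidableEq V]
    (μ : V → ℝ) (W : V → V → ℝ)
    (hμ : ∀ x, 0 < μ x)
    (hWsym : ∀ x y, W x y = W y x)
    (hWpos : ∀ x y, x ≠ y → 0 < W x y)
    (ρ : ℝ) (hρ : 0 < ρ)
    (h : V → ℝ) (hpos : ∃ x, 0 < h x) (hneg : ∃ x, h x < 0)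
    (u₀ : V → ℝ) (hu₀ : intV μ (fun x => h x * Real.exp (u₀ x)) = 1) :
    ∃ u : ℝ → V → ℝ,
      (u 0 = u₀) ∧
      (∀ x, ∀ t ∈ Set.Ici (0 : ℝ),
        HasDerivAt (fun s => u s x)
          (alphaC μ W ρ h (u t) * h x - Rcurv μ W ρ (u t) x) t) ∧
      (∀ v : ℝ → V → ℝ, v 0 = u₀ →
        (∀ x, ∀ t ∈ Set.Ici (0 : ℝ),
          HasDerivAt (fun s => v s x)
            (alphaC μ W ρ h (v t) * h x - Rcurv μ W ρ (v t) x) t) →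
        ∀ t ∈ Set.Ici (0 : ℝ), v t = u t) ∧
      (∃ tn : ℕ → ℝ, StrictMono tn ∧ Filter.Tendsto tn Filter.atTop Filter.atTop ∧
        ∃ u_inf : V → ℝ, intV μ (fun x => h x * Real.exp (u_inf x)) = 1 ∧
          TendstoUniformly (fun n x => u (tn n) x) u_inf Filter.atTop ∧
          ∀ x, opL μ W u_inf x = ρ * h x * Real.exp (u_inf x) - ρ / volV μ) := by

  classical
  have hF := contDiff_flowF μ W ρ h hμ hpos
  obtain ⟨C, hC⟩ := coercive μ W hμ hWpos ρ hρ h (energyJ μ W ρ u₀)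
  have hap : ∀ u : ℝ → V → ℝ, u 0 = u₀ → ∀ T, 0 ≤ T →
      (∀ t ∈ Set.Icc 0 T, HasDerivAt u (flowF μ W ρ h (u t)) t) → ‖u T‖ < C + 1 := by
    intro u h0 T hT hu
    have h1 := constraint_const μ W ρ h hμ hpos u T hT hu
    have h2 := energy_mono μ W hμ hWsym ρ hρ h hpos u 0 T hT hu
    rw [h0] at h1 h2
    have := hC (u T) (h1.trans hu₀) h2
    linarith
  obtain ⟨u, hu0, hu⟩ := ode_confined (flowF μ W ρ h) hF u₀ (C + 1) hap (by
    have := hC u₀ hu₀ le_rfl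
    linarith)
  refine ⟨u, hu0, ?_, ?_, ?_⟩
  · intro x t ht
    exact (hasDerivAt_pi.mp (hu t ht).1) x
  · intro v hv0 hv t ht
    refine ode_unique (flowF μ W ρ h) hF u v (hv0.trans hu0.symm) (fun t ht => (hu t ht).1)
      (fun t ht => hasDerivAt_pi.mpr fun x => hv x t ht) t ht
  · -- energy along the flow
    have hJc : Continuous (energyJ μ W ρ) := by
      unfold energyJ
      fun_prop
    have hDc : Continuous (dissD μ W ρ h) := by
      unfold dissD
      have := hF.continuous
      fun_prop
    obtain ⟨B, hB⟩ := (isCompact_closedBall (0 : V → ℝ) (C + 1)).exists_bound_of_continuousOn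
      hJc.continuousOn
    have hanti : Antitone (fun n : ℕ => energyJ μ W ρ (u n)) := by
      intro m n hmn
      refine energy_mono μ W hμ hWsym ρ hρ h hpos u m n (by exact_mod_cast hmn) (fun t ht => ?_)
      exact (hu t (le_trans (Nat.cast_nonneg m) ht.1)).1
    have hbdd : BddBelow (Set.range (fun n : ℕ => energyJ μ W ρ (u n))) := by
      refine ⟨-B, ?_⟩
      rintro _ ⟨n, rfl⟩
      have := hB (u n) (by
        rw [mem_closedBall_zero_iff]; exact (hu n (Nat.cast_nonneg n)).2.le)
      rw [Real.norm_eq_abs] at this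
      exact (abs_le.mp this).1
    have hlim := tendsto_atTop_ciInf hanti hbdd
    have hdiff : Filter.Tendsto
        (fun n : ℕ => energyJ μ W ρ (u ((n + 1 : ℕ) : ℝ)) - energyJ μ W ρ (u n))
        Filter.atTop (nhds 0) := by
      have := (hlim.comp (Filter.tendsto_add_atTop_nat 1)).sub hlim
      simpa only [sub_self, Function.comp_def] using this
    have hmvt : ∀ n : ℕ, ∃ t ∈ Set.Ioo (n : ℝ) ((n + 1 : ℕ) : ℝ),
        -ρ * dissD μ W ρ h (u t)
          = energyJ μ W ρ (u ((n + 1 : ℕ) : ℝ)) - energyJ μ W ρ (u n) := by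
      intro n
      have hd : ∀ t, (n : ℝ) ≤ t → HasDerivAt (fun s => energyJ μ W ρ (u s))
          (-ρ * dissD μ W ρ h (u t)) t := fun t ht =>
        energy_flow μ W hμ hWsym ρ hρ h hpos u t (hu t (le_trans (Nat.cast_nonneg n) ht)).1
      obtain ⟨t, ht, he⟩ := exists_hasDerivAt_eq_slope (fun s => energyJ μ W ρ (u s))
        (fun t => -ρ * dissD μ W ρ h (u t)) (a := (n : ℝ)) (b := ((n + 1 : ℕ) : ℝ))
        (by push_cast; linarith)
        (fun t ht => (hd t ht.1).continuousAt.continuousWithinAt)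
        (fun t ht => hd t ht.1.le)
      refine ⟨t, ht, ?_⟩
      rw [he]
      push_cast
      simp
    choose s hs hsd using hmvt
    have hsmono : StrictMono s := strictMono_nat_of_lt_succ fun n => (hs n).2.trans (hs (n + 1)).1
    have hs_lim : Filter.Tendsto s Filter.atTop Filter.atTop :=
      Filter.tendsto_atTop_mono (fun n => (hs n).1.le) tendsto_natCast_atTop_atTop
    have hs0 : ∀ n, 0 ≤ s n := fun n => le_trans (Nat.cast_nonneg n) (hs n).1.le
    have hdl : Filter.Tendsto (fun n => dissD μ W ρ h (u (s n))) Filter.atTop (nhds 0) := by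
      have h1 := hdiff.const_mul (-(1 / ρ))
      rw [mul_zero] at h1
      refine h1.congr fun n => ?_
      rw [← hsd n]
      field_simp
    obtain ⟨w, _, φ, hφ, hw⟩ := (isCompact_closedBall (0 : V → ℝ) (C + 1)).tendsto_subseq
      (x := fun n => u (s n)) (fun n => by
        rw [mem_closedBall_zero_iff]; exact (hu _ (hs0 n)).2.le)
    have hIc : Continuous (fun u : V → ℝ => intV μ (fun x => h x * Real.exp (u x))) := by
      unfold intV
      fun_prop
    have hw1 : intV μ (fun x => h x * Real.exp (w x)) = 1 := by
      refine tendsto_nhds_unique ((hIc.tendsto w).comp hw) ?_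
      refine tendsto_const_nhds.congr fun n => ?_
      have := constraint_const μ W ρ h hμ hpos u (s (φ n)) (hs0 _) (fun t ht => (hu t ht.1).1)
      rw [hu0, hu₀] at this
      exact this.symm
    have hwD : dissD μ W ρ h w = 0 :=
      tendsto_nhds_unique ((hDc.tendsto w).comp hw) (hdl.comp hφ.tendsto_atTop)
    refine ⟨fun n => s (φ n), hsmono.comp hφ, hs_lim.comp hφ.tendsto_atTop, w, hw1, ?_, ?_⟩
    · rw [Metric.tendstoUniformly_iff]
      intro ε hε
      filter_upwards [Metric.tendsto_nhds.mp hw ε hε] with n hn x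
      rw [dist_comm]
      exact lt_of_le_of_lt (dist_le_pi_dist (u (s (φ n))) w x) hn
    · exact stationary μ W hμ hWsym ρ hρ h w hw1 hwD
end
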